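/- Let 0 < κ ≤ σ < 1. There exist c, ε, δ₀ ∈ (0,1], depending only on κ and σ, such that for all 0 < δ < δ₀ the following holds. Let A ⊆ ℝ be a finite union of δ-balls with vol(A) ≤ δ^{1−σ} satisfying vol(A ∩ B(x,r)) ≤ δ^{−ε} r^κ vol(A) for all x ∈ A and r ≥ δ. Let μ be a probability measure on [0,1] with μ(B(x,r)) ≤ δ^{−ε} r^κ for all x and r. Then there exists x ∈ supp μ with vol(A + xA) > δ^{−c} vol(A). -/

import Mathlib

open MeasureTheory
open scoped Pointwise ENNReal

/-- The support of a measure: points all of whose open neighbourhoods have positive measure. -/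
def msupport {X : Type*} [TopologicalSpace X] [MeasurableSpace X]
    (μ : Measure X) : Set X :=
  {x | ∀ U : Set X, IsOpen U → x ∈ U → 0 < μ U}



/-- number of grid cells of side `r` met by `Y` -/
noncomputable def cov (r : ℝ) (Y : Finset ℝ) : ℝ := ((Y.image (fun y => ⌊y / r⌋)).card : ℝ)

theorem cov_nonneg (r : ℝ) (Y : Finset ℝ) : 0 ≤ cov r Y := Nat.cast_nonneg _

theorem cov_mono {r : ℝ} {Y Z : Finset ℝ} (h : Y ⊆ Z) : cov r Y ≤ cov r Z := by
  unfold cov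
  exact_mod_cast Finset.card_le_card (Finset.image_subset_image h)

theorem cov_pos {r : ℝ} {Y : Finset ℝ} (h : Y.Nonempty) : 1 ≤ cov r Y := by
  unfold cov
  exact_mod_cast Finset.card_pos.2 (h.image _)

theorem cov_le_of_cells {r r' m : ℝ} {Y Z : Finset ℝ} (F : ℤ → Finset ℤ)
    (hF : ∀ k, ((F k).card : ℝ) ≤ m)
    (h : ∀ y ∈ Y, ∃ z ∈ Z, ⌊y / r⌋ ∈ F ⌊z / r'⌋) : cov r Y ≤ m * cov r' Z := by
  unfold cov
  have h1 : Y.image (fun y => ⌊y / r⌋) ⊆ (Z.image (fun y => ⌊y / r'⌋)).biUnion F := by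
    intro k hk
    obtain ⟨y, hy, rfl⟩ := Finset.mem_image.1 hk
    obtain ⟨z, hz, hzz⟩ := h y hy
    exact Finset.mem_biUnion.2 ⟨_, Finset.mem_image_of_mem _ hz, hzz⟩
  have h2 := Finset.card_le_card h1
  have h3 : (((Z.image (fun y => ⌊y / r'⌋)).biUnion F).card : ℝ)
      ≤ ∑ k ∈ Z.image (fun y => ⌊y / r'⌋), ((F k).card : ℝ) := by
    exact_mod_cast Finset.card_biUnion_le
  have h4 : ∑ k ∈ Z.image (fun y => ⌊y / r'⌋), ((F k).card : ℝ)
      ≤ ∑ k ∈ Z.image (fun y => ⌊y / r'⌋), m := Finset.sum_le_sum fun k _ => hF k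
  rw [Finset.sum_const, nsmul_eq_mul] at h4
  have h5 : ((Y.image (fun y => ⌊y / r⌋)).card : ℝ)
    ≤ (((Z.image (fun y => ⌊y / r'⌋)).biUnion F).card : ℝ) := by exact_mod_cast h2
  linarith

/-- master comparison lemma -/
theorem cov_le {r r' c e : ℝ} (hr : 0 < r) (hr' : 0 < r') (he : 0 ≤ e) {Y Z : Finset ℝ}
    (h : ∀ y ∈ Y, ∃ z ∈ Z, |y - (z + c)| ≤ e) :
    cov r Y ≤ ((r' + 2 * e) / r + 2) * cov r' Z := by
  refine cov_le_of_cells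
    (fun k => Finset.Icc ⌊(k * r' + c - e) / r⌋ ⌊((k + 1) * r' + c + e) / r⌋) ?_ ?_
  · intro k
    rw [Int.card_Icc]
    have h1 : ((k + 1) * r' + c + e) / r = (k * r' + c - e) / r + (r' + 2 * e) / r := by
      field_simp; ring
    have h2 := Int.floor_le (((k + 1) * r' + c + e) / r)
    have h3 := Int.lt_floor_add_one ((k * r' + c - e) / r)
    have h4 : 0 ≤ (r' + 2 * e) / r := by positivity
    have h5 : ((⌊((k + 1) * r' + c + e) / r⌋ + 1 - ⌊(k * r' + c - e) / r⌋ : ℤ) : ℝ)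
        ≤ (r' + 2 * e) / r + 2 := by
      push_cast; linarith
    rcases le_or_gt 0 (⌊((k + 1) * r' + c + e) / r⌋ + 1 - ⌊(k * r' + c - e) / r⌋) with h6 | h6
    · rw [← Int.toNat_of_nonneg h6] at h5
      exact_mod_cast h5
    · rw [Int.toNat_of_nonpos h6.le]
      push_cast; linarith
  · intro y hy
    obtain ⟨z, hz, hyz⟩ := h y hy
    refine ⟨z, hz, ?_⟩
    rw [Finset.mem_Icc]
    have h1 := Int.floor_le (z / r')
    have h2 := Int.lt_floor_add_one (z / r')
    rw [le_div_iff₀ hr'] at h1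
    rw [div_lt_iff₀ hr'] at h2
    rw [abs_le] at hyz
    constructor <;> apply Int.floor_le_floor <;> apply div_le_div_of_nonneg_right _ hr.le <;> linarith

theorem cov_coarse {r r' : ℝ} (hr' : 0 < r') (h : r' ≤ r) (Y : Finset ℝ) :
    cov r Y ≤ 3 * cov r' Y := by
  have h0 := lt_of_lt_of_le hr' h
  have h1 := cov_le (c := 0) (e := 0) h0 hr' le_rfl
    (Y := Y) (Z := Y) (fun y hy => ⟨y, hy, by simp⟩)
  refine h1.trans ?_
  gcongr
  · exact cov_nonneg _ _
  · have : (r' + 2 * 0) / r ≤ 1 := by rw [div_le_one h0]; linarith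
    linarith

theorem cov_fine {r r' : ℝ} (hr : 0 < r) (hr' : 0 < r') (Y : Finset ℝ) :
    cov r Y ≤ (r' / r + 2) * cov r' Y := by
  have h1 := cov_le (c := 0) (e := 0) hr hr' le_rfl
    (Y := Y) (Z := Y) (fun y hy => ⟨y, hy, by simp⟩)
  simpa using h1

theorem cov_translate {r : ℝ} (hr : 0 < r) (Y Z : Finset ℝ) (c : ℝ)
    (h : ∀ y ∈ Y, y + c ∈ Z) : cov r Y ≤ 3 * cov r Z := by
  have h1 := cov_le (c := -c) (e := 0) hr hr le_rfl
    (Y := Y) (Z := Z) (fun y hy => ⟨y + c, h y hy, by simp⟩)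
  refine h1.trans (le_of_eq ?_)
  field_simp; ring

theorem cov_smul_pos {c r : ℝ} (hc : 0 < c) (Y : Finset ℝ) :
    cov (c * r) (c • Y) = cov r Y := by
  unfold cov
  congr 2
  ext k
  simp only [Finset.mem_image, Finset.mem_smul_finset]
  constructor
  · rintro ⟨_, ⟨y, hy, rfl⟩, rfl⟩
    exact ⟨y, hy, by rw [smul_eq_mul, mul_div_mul_left _ _ hc.ne']⟩
  · rintro ⟨y, hy, rfl⟩
    exact ⟨_, ⟨y, hy, rfl⟩, by rw [smul_eq_mul, mul_div_mul_left _ _ hc.ne']⟩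

theorem cov_neg {r : ℝ} (hr : 0 < r) (Y : Finset ℝ) : cov r (-Y) ≤ 3 * cov r Y := by
  refine cov_le_of_cells (fun k => Finset.Icc (-k - 2) (-k)) ?_ ?_
  · intro k; rw [Int.card_Icc]; ring_nf; norm_num
  · intro y hy
    refine ⟨-y, Finset.mem_neg'.1 hy, ?_⟩
    rw [Finset.mem_Icc]
    have h1 := Int.floor_le (-y / r)
    have h2 := Int.lt_floor_add_one (-y / r)
    have h3 : y / r = -(-y / r) := by ring
    rw [h3]
    constructor
    · apply Int.le_floor.2; push_cast; linarith
    · apply Int.le_of_lt_add_one; apply Int.floor_lt.2; push_cast; linarith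

theorem cov_smul_abs {c r : ℝ} (hc : c ≠ 0) (hr : 0 < r) (Y : Finset ℝ) :
    cov (|c| * r) (c • Y) ≤ 3 * cov r Y := by
  rcases lt_or_gt_of_ne hc with h | h
  · have h1 : c • Y = (-c) • (-Y) := by
      ext x; simp only [Finset.mem_smul_finset]
      constructor
      · rintro ⟨y, hy, rfl⟩; exact ⟨-y, Finset.neg_mem_neg hy, by simp⟩
      · rintro ⟨y, hy, rfl⟩; exact ⟨-y, Finset.mem_neg'.1 hy, by simp⟩
    rw [h1, abs_of_neg h, cov_smul_pos (by linarith)]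
    exact cov_neg hr Y
  · rw [abs_of_pos h, cov_smul_pos h]
    linarith [cov_nonneg r Y]

/-- floors -/
noncomputable def flo (r : ℝ) (Y : Finset ℝ) : Finset ℤ := Y.image (fun y => ⌊y / r⌋)

theorem cov_eq (r : ℝ) (Y : Finset ℝ) : cov r Y = ((flo r Y).card : ℝ) := rfl

theorem flo_nonempty {r : ℝ} {Y : Finset ℝ} (h : Y.Nonempty) : (flo r Y).Nonempty := h.image _

theorem flo_add_subset (r : ℝ) (A C : Finset ℝ) :
    flo r (A + C) ⊆ flo r A + flo r C + {0, 1} := by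
  intro k hk
  obtain ⟨y, hy, rfl⟩ := Finset.mem_image.1 hk
  obtain ⟨a, ha, c, hc, rfl⟩ := Finset.mem_add.1 hy
  have h : ⌊(a + c) / r⌋ = ⌊a / r⌋ + ⌊c / r⌋ ∨ ⌊(a + c) / r⌋ = ⌊a / r⌋ + ⌊c / r⌋ + 1 := by
    rw [add_div]
    have h1 := Int.le_floor_add (a / r) (c / r)
    have h2 := Int.le_floor_add_floor (a / r) (c / r)
    omega
  have hm : ⌊a / r⌋ + ⌊c / r⌋ ∈ flo r A + flo r C :=
    Finset.add_mem_add (Finset.mem_image_of_mem _ ha) (Finset.mem_image_of_mem _ hc)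
  rcases h with h | h
  · simp only [h]
    have := Finset.add_mem_add hm (show (0 : ℤ) ∈ ({0, 1} : Finset ℤ) by simp)
    simpa using this
  · simp only [h]
    exact Finset.add_mem_add hm (show (1 : ℤ) ∈ ({0, 1} : Finset ℤ) by simp)

theorem add_flo_subset (r : ℝ) (A C : Finset ℝ) :
    flo r A + flo r C ⊆ flo r (A + C) + {0, -1} := by
  intro k hk
  obtain ⟨k1, h1, k2, h2, rfl⟩ := Finset.mem_add.1 hk
  obtain ⟨a, ha, rfl⟩ := Finset.mem_image.1 h1
  obtain ⟨c, hc, rfl⟩ := Finset.mem_image.1 h2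
  have h : ⌊a / r⌋ + ⌊c / r⌋ = ⌊(a + c) / r⌋ ∨ ⌊a / r⌋ + ⌊c / r⌋ = ⌊(a + c) / r⌋ + (-1) := by
    rw [add_div]
    have h1 := Int.le_floor_add (a / r) (c / r)
    have h2 := Int.le_floor_add_floor (a / r) (c / r)
    omega
  have hm : ⌊(a + c) / r⌋ ∈ flo r (A + C) :=
    Finset.mem_image_of_mem (fun y => ⌊y / r⌋) (Finset.add_mem_add ha hc)
  rcases h with h | h
  · simp only [h]
    have := Finset.add_mem_add hm (show (0 : ℤ) ∈ ({0, -1} : Finset ℤ) by simp)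
    simpa using this
  · simp only [h]
    exact Finset.add_mem_add hm (show (-1 : ℤ) ∈ ({0, -1} : Finset ℤ) by simp)

theorem card_add_pair (S : Finset ℤ) (a b : ℤ) : ((S + {a, b}).card : ℝ) ≤ 2 * S.card := by
  have h := Finset.card_add_le (s := S) (t := {a, b})
  have h2 : ({a, b} : Finset ℤ).card ≤ 2 := Finset.card_le_two
  have : (S + {a, b}).card ≤ S.card * 2 := h.trans (Nat.mul_le_mul_left _ h2)
  have h3 : ((S + {a, b}).card : ℝ) ≤ S.card * 2 := by exact_mod_cast this
  linarith

theorem cov_add_le (r : ℝ) (A C : Finset ℝ) :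
    cov r (A + C) ≤ 2 * ((flo r A + flo r C).card : ℝ) := by
  have h : ((flo r (A + C)).card : ℝ) ≤ ((flo r A + flo r C + {0, 1}).card : ℝ) := by
    exact_mod_cast Finset.card_le_card (flo_add_subset r A C)
  exact h.trans (card_add_pair _ _ _)

theorem card_le_cov_add (r : ℝ) (A C : Finset ℝ) :
    ((flo r A + flo r C).card : ℝ) ≤ 2 * cov r (A + C) := by
  have h : ((flo r A + flo r C).card : ℝ) ≤ ((flo r (A + C) + {0, -1}).card : ℝ) := by
    exact_mod_cast Finset.card_le_card (add_flo_subset r A C)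
  exact h.trans (card_add_pair _ _ _)

theorem petridis_exists (A B : Finset ℤ) (hA : A.Nonempty) (K : ℝ)
    (h : ((A + B).card : ℝ) ≤ K * A.card) :
    ∃ X ⊆ A, X.Nonempty ∧ ∀ C : Finset ℤ, ((C + X + B).card : ℝ) ≤ K * (C + X).card := by
  have hA' : A ∈ A.powerset.erase ∅ :=
    Finset.mem_erase_of_ne_of_mem hA.ne_empty (Finset.mem_powerset_self _)
  obtain ⟨X, hX, hmin⟩ := Finset.exists_min_image (A.powerset.erase ∅)
    (fun X : Finset ℤ => ((X + B).card : ℝ) / X.card) ⟨A, hA'⟩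
  rw [Finset.mem_erase, Finset.mem_powerset] at hX
  have hXne : X.Nonempty := Finset.nonempty_iff_ne_empty.2 hX.1
  have hXc : (0 : ℝ) < X.card := by exact_mod_cast hXne.card_pos
  have hAc : (0 : ℝ) < A.card := by exact_mod_cast hA.card_pos
  refine ⟨X, hX.2, hXne, fun C => ?_⟩
  have hpet : ∀ A' ⊆ X, (X + B).card * A'.card ≤ (A' + B).card * X.card := by
    intro A' hA'
    rcases A'.eq_empty_or_nonempty with rfl | hne
    · simp
    · have := hmin A' (Finset.mem_erase_of_ne_of_mem hne.ne_empty
        (Finset.mem_powerset.2 (hA'.trans hX.2)))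
      have hc : (0 : ℝ) < A'.card := by exact_mod_cast hne.card_pos
      rw [div_le_div_iff₀ hXc hc] at this
      exact_mod_cast this
  have h1 := Finset.pluennecke_petridis_inequality_add C hpet
  have h1' : ((C + X + B).card : ℝ) * X.card ≤ (X + B).card * (C + X).card := by exact_mod_cast h1
  have h2 := hmin A hA'
  have h3 : ((A + B).card : ℝ) / A.card ≤ K := by rw [div_le_iff₀ hAc]; exact h
  have h4 : ((X + B).card : ℝ) ≤ K * X.card := by
    rw [← div_le_iff₀ hXc]; exact h2.trans h3
  have h5 : ((C + X + B).card : ℝ) * X.card ≤ K * (C + X).card * X.card := by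
    calc _ ≤ ((X + B).card : ℝ) * (C + X).card := h1'
      _ ≤ K * X.card * (C + X).card := by gcongr
      _ = _ := by ring
  exact le_of_mul_le_mul_right h5 hXc

theorem card_le_add_left {X Y : Finset ℤ} (hX : X.Nonempty) : (Y.card : ℝ) ≤ (X + Y).card := by
  exact_mod_cast Finset.card_le_card_add_left hX

theorem swapZ (A B C : Finset ℤ) (hA : A.Nonempty) (K : ℝ) (hK : 0 ≤ K)
    (h : ((A + B).card : ℝ) ≤ K * A.card) : ((B + C).card : ℝ) ≤ K * (A + C).card := by
  obtain ⟨X, hXA, hX, hC⟩ := petridis_exists A B hA K h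
  calc ((B + C).card : ℝ) ≤ (X + (B + C)).card := card_le_add_left hX
    _ = (C + X + B).card := by congr 2; abel
    _ ≤ K * (C + X).card := hC C
    _ ≤ K * (A + C).card := by
        have hh : ((C + X).card : ℝ) ≤ (A + C).card := by
          rw [add_comm C X]; exact_mod_cast Finset.card_le_card (Finset.add_subset_add_right hXA)
        gcongr

theorem absorbZ (A C : Finset ℤ) (hA : A.Nonempty) (K : ℝ) (hK : 0 ≤ K)
    (h : ((A + A).card : ℝ) ≤ K * A.card) : ((A + A + C).card : ℝ) ≤ K ^ 2 * (A + C).card := by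
  obtain ⟨X, hXA, hX, hC⟩ := petridis_exists A A hA K h
  calc ((A + A + C).card : ℝ) ≤ (X + (A + A + C)).card := card_le_add_left hX
    _ = ((A + C) + X + A).card := by congr 2; abel
    _ ≤ K * ((A + C) + X).card := hC _
    _ = K * (C + X + A).card := by congr 3; abel
    _ ≤ K * (K * (C + X).card) := by gcongr; exact hC C
    _ ≤ K * (K * (A + C).card) := by
        have hh : ((C + X).card : ℝ) ≤ (A + C).card := by
          rw [add_comm C X]; exact_mod_cast Finset.card_le_card (Finset.add_subset_add_right hXA)
        gcongr
    _ = _ := by ring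

theorem swap {r : ℝ} {A B : Finset ℝ} (hA : A.Nonempty) {K : ℝ} (hK : 0 ≤ K)
    (h : cov r (A + B) ≤ K * cov r A) (C : Finset ℝ) :
    cov r (B + C) ≤ 8 * K * cov r (A + C) := by
  have h1 := card_le_cov_add r A B
  have h2 := swapZ (flo r A) (flo r B) (flo r C) (flo_nonempty hA) (2 * K) (by positivity)
    (by rw [cov_eq r A] at h; linarith)
  have h3 := cov_add_le r B C
  have h4 := card_le_cov_add r A C
  have h5 : 2 * K * ((flo r A + flo r C).card : ℝ) ≤ 2 * K * (2 * cov r (A + C)) := by gcongr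
  linarith

theorem absorb {r : ℝ} {A : Finset ℝ} (hA : A.Nonempty) {K : ℝ} (hK : 0 ≤ K)
    (h : cov r (A + A) ≤ K * cov r A) (C : Finset ℝ) :
    cov r (A + A + C) ≤ 32 * K ^ 2 * cov r (A + C) := by
  have h1 := card_le_cov_add r A A
  have h2 := absorbZ (flo r A) (flo r C + {0, 1}) (flo_nonempty hA) (2 * K) (by positivity)
    (by rw [cov_eq r A] at h; linarith)
  have h3 := cov_add_le r A (A + C)
  rw [← add_assoc] at h3
  have h4 := card_le_cov_add r A C
  have h5 : ((flo r A + flo r (A + C)).card : ℝ)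
      ≤ ((flo r A + flo r A + (flo r C + {0, 1})).card : ℝ) := by
    have : flo r A + flo r (A + C) ⊆ flo r A + flo r A + (flo r C + {0, 1}) := by
      refine (Finset.add_subset_add_left (flo_add_subset r A C)).trans (le_of_eq ?_)
      abel
    exact_mod_cast Finset.card_le_card this
  have h6 := card_add_pair (flo r A + flo r C) 0 1
  rw [add_assoc] at h6
  have h7 : (2 * K) ^ 2 * ((flo r A + (flo r C + {0, 1})).card : ℝ)
      ≤ (2 * K) ^ 2 * (2 * (2 * cov r (A + C))) := by gcongr; linarith
  nlinarith

theorem ruzsa_cov {r : ℝ} (A B C : Finset ℝ) :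
    cov r (A + C) * cov r B ≤ 8 * (cov r (A + B) * cov r (B + C)) := by
  have h := Finset.ruzsa_triangle_inequality_add_add_add (flo r A) (flo r B) (flo r C)
  have h' : ((flo r A + flo r C).card : ℝ) * (flo r B).card
    ≤ (flo r A + flo r B).card * (flo r B + flo r C).card := by exact_mod_cast h
  have h1 := cov_add_le r A C
  have h2 := card_le_cov_add r A B
  have h3 := card_le_cov_add r B C
  rw [cov_eq r B]
  calc cov r (A + C) * ((flo r B).card : ℝ)
      ≤ (2 * ((flo r A + flo r C).card : ℝ)) * (flo r B).card := by gcongr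
    _ = 2 * (((flo r A + flo r C).card : ℝ) * (flo r B).card) := by ring
    _ ≤ 2 * ((flo r A + flo r B).card * (flo r B + flo r C).card) := by gcongr
    _ ≤ 2 * ((2 * cov r (A + B)) * (2 * cov r (B + C))) := by
        gcongr
        exact mul_nonneg zero_le_two (cov_nonneg _ _)
    _ = _ := by ring

theorem cov_sub_self {r : ℝ} (A : Finset ℝ) :
    cov r (A + (-1 : ℝ) • A) * cov r A ≤ 12 * cov r (A + A) ^ 2 := by
  have h := Finset.ruzsa_triangle_inequality_sub_add_add (flo r A) (flo r A) (flo r A)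
  have h' : ((flo r A - flo r A).card : ℝ) * (flo r A).card
    ≤ (flo r A + flo r A).card * (flo r A + flo r A).card := by exact_mod_cast h
  have h2 := card_le_cov_add r A A
  have h1 : cov r (A + (-1 : ℝ) • A) ≤ 2 * ((flo r A - flo r A).card : ℝ) := by
    refine le_trans ?_ (card_add_pair _ 0 (-1))
    have : flo r (A + (-1 : ℝ) • A) ⊆ (flo r A - flo r A) + {0, -1} := by
      intro k hk
      obtain ⟨y, hy, rfl⟩ := Finset.mem_image.1 hk
      obtain ⟨a, ha, c', hc', rfl⟩ := Finset.mem_add.1 hy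
      obtain ⟨c, hc, rfl⟩ := Finset.mem_smul_finset.1 hc'
      have h : ⌊(a + (-1 : ℝ) • c) / r⌋ = ⌊a / r⌋ - ⌊c / r⌋ ∨
          ⌊(a + (-1 : ℝ) • c) / r⌋ = ⌊a / r⌋ - ⌊c / r⌋ + -1 := by
        have e : (a + (-1 : ℝ) • c) / r = a / r - c / r := by rw [smul_eq_mul]; ring
        rw [e]
        have h1 := Int.floor_le (a / r)
        have h2 := Int.lt_floor_add_one (a / r)
        have h3 := Int.floor_le (c / r)
        have h4 := Int.lt_floor_add_one (c / r)
        have h5 : ⌊a / r⌋ - ⌊c / r⌋ + -1 ≤ ⌊a / r - c / r⌋ := by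
          apply Int.le_floor.2; push_cast; linarith
        have h6 : ⌊a / r - c / r⌋ < ⌊a / r⌋ - ⌊c / r⌋ + 1 := by
          apply Int.floor_lt.2; push_cast; linarith
        omega
      have hm : ⌊a / r⌋ - ⌊c / r⌋ ∈ flo r A - flo r A :=
        Finset.sub_mem_sub (Finset.mem_image_of_mem _ ha) (Finset.mem_image_of_mem _ hc)
      rcases h with h | h
      · simp only [h]
        have := Finset.add_mem_add hm (show (0 : ℤ) ∈ ({0, -1} : Finset ℤ) by simp)
        simpa using this
      · simp only [h]
        exact Finset.add_mem_add hm (show (-1 : ℤ) ∈ ({0, -1} : Finset ℤ) by simp)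
    rw [cov_eq]
    exact_mod_cast Finset.card_le_card this
  rw [cov_eq r A]
  have h0 := cov_nonneg r (A + A)
  calc cov r (A + (-1 : ℝ) • A) * ((flo r A).card : ℝ)
      ≤ (2 * ((flo r A - flo r A).card : ℝ)) * (flo r A).card := by gcongr
    _ = 2 * (((flo r A - flo r A).card : ℝ) * (flo r A).card) := by ring
    _ ≤ 2 * ((flo r A + flo r A).card * (flo r A + flo r A).card) := by gcongr
    _ ≤ 2 * ((2 * cov r (A + A)) * (2 * cov r (A + A))) := by gcongr
    _ ≤ _ := by nlinarith

theorem rep_exists (q : ℝ) (hq : 0 < q) (Y : Finset ℝ) (m : ℕ) (hm : 1 ≤ m) :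
    ∃ P ⊆ Y, cov q Y ≤ m * (P.card : ℝ) ∧
      ∀ p ∈ P, ∀ p' ∈ P, p ≠ p' → ((m : ℝ) - 1) * q ≤ |p - p'| := by
  have hm' : (0 : ℤ) < m := by exact_mod_cast hm
  have hmr : (0 : ℝ) < m := by exact_mod_cast hm
  obtain ⟨c, -, hc⟩ := Finset.exists_le_card_fiber_of_nsmul_le_card_of_maps_to
    (s := flo q Y) (t := Finset.Ico (0 : ℤ) m) (f := fun k => k % (m : ℤ))
    (b := ((flo q Y).card : ℝ) / m)
    (fun a _ => Finset.mem_Ico.2 ⟨Int.emod_nonneg _ hm'.ne', Int.emod_lt_of_pos _ hm'⟩)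
    ⟨0, Finset.mem_Ico.2 ⟨le_rfl, hm'⟩⟩
    (by rw [Int.card_Ico, nsmul_eq_mul]; simp; field_simp; rfl)
  have hg : ∀ k : ℤ, ∃ y : ℝ, k ∈ flo q Y → y ∈ Y ∧ ⌊y / q⌋ = k := by
    intro k
    by_cases h : k ∈ flo q Y
    · obtain ⟨y, hy, h⟩ := Finset.mem_image.1 h
      exact ⟨y, fun _ => ⟨hy, h⟩⟩
    · exact ⟨0, fun h' => absurd h' h⟩
  choose g hg using hg
  set F := (flo q Y).filter (fun k => k % (m : ℤ) = c) with hF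
  have hFs : ∀ k ∈ F, k ∈ flo q Y := fun k hk => (Finset.mem_filter.1 hk).1
  have hinj : Set.InjOn g F := by
    intro a ha b hb hab
    rw [← (hg a (hFs a ha)).2, ← (hg b (hFs b hb)).2, hab]
  refine ⟨F.image g, ?_, ?_, ?_⟩
  · intro y hy
    obtain ⟨k, hk, rfl⟩ := Finset.mem_image.1 hy
    exact (hg k (hFs k hk)).1
  · rw [Finset.card_image_of_injOn hinj, cov_eq]
    rw [div_le_iff₀ hmr] at hc
    linarith
  · intro p hp p' hp' hne
    obtain ⟨k, hk, rfl⟩ := Finset.mem_image.1 hp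
    obtain ⟨l, hl, rfl⟩ := Finset.mem_image.1 hp'
    have hkl : k ≠ l := fun h => hne (by rw [h])
    have h1 := (hg k (hFs k hk)).2
    have h2 := (hg l (hFs l hl)).2
    have e1 := (Finset.mem_filter.1 hk).2
    have e2 := (Finset.mem_filter.1 hl).2
    have hd : (m : ℤ) ∣ k - l := Int.ModEq.dvd (show l % (m : ℤ) = k % (m : ℤ) by rw [e1, e2])
    have hle : (m : ℤ) ≤ |k - l| := Int.le_of_dvd (abs_pos.2 (sub_ne_zero.2 hkl)) ((dvd_abs _ _).2 hd)
    have hle' : (m : ℝ) ≤ |(k : ℝ) - l| := by exact_mod_cast hle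
    have a1 := Int.floor_le (g k / q)
    have a2 := Int.lt_floor_add_one (g k / q)
    have a3 := Int.floor_le (g l / q)
    have a4 := Int.lt_floor_add_one (g l / q)
    rw [h1] at a1 a2
    rw [h2] at a3 a4
    have h5 : (m : ℝ) - 1 ≤ |g k / q - g l / q| := by
      rcases le_abs.1 hle' with h | h
      · exact le_abs.2 (Or.inl (by linarith))
      · exact le_abs.2 (Or.inr (by linarith))
    rw [← sub_div, abs_div, abs_of_pos hq, le_div_iff₀ hq] at h5
    exact h5

theorem sep_mul {r : ℝ} (hr : 0 < r) (P Z : Finset ℝ)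
    (h : ∀ p ∈ P, ∀ p' ∈ P, p ≠ p' → ∀ z ∈ Z, ∀ z' ∈ Z, r ≤ |p + z - (p' + z')|) :
    (P.card : ℝ) * cov r Z ≤ 3 * cov r (P + Z) := by
  have hsub : P.biUnion (fun p => flo r ({p} + Z)) ⊆ flo r (P + Z) := by
    intro k hk
    obtain ⟨p, hp, hk⟩ := Finset.mem_biUnion.1 hk
    exact Finset.image_subset_image
      (Finset.add_subset_add_right (Finset.singleton_subset_iff.2 hp)) hk
  have hdisj : (P : Set ℝ).PairwiseDisjoint (fun p => flo r ({p} + Z)) := by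
    intro p hp p' hp' hne
    rw [Function.onFun, Finset.disjoint_left]
    intro k hk hk'
    obtain ⟨y, hy, rfl⟩ := Finset.mem_image.1 hk
    obtain ⟨y', hy', he⟩ := Finset.mem_image.1 hk'
    rw [Finset.singleton_add] at hy hy'
    obtain ⟨z, hz, rfl⟩ := Finset.mem_image.1 hy
    obtain ⟨z', hz', rfl⟩ := Finset.mem_image.1 hy'
    have h1 := h p hp p' hp' hne z hz z' hz'
    have h2 := Int.abs_sub_lt_one_of_floor_eq_floor he
    rw [← sub_div, abs_div, abs_of_pos hr, div_lt_one hr, abs_sub_comm] at h2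
    simp only [vadd_eq_add] at h2
    linarith
  have h1 := Finset.card_le_card hsub
  rw [Finset.card_biUnion hdisj] at h1
  have h2 : (∑ p ∈ P, cov r ({p} + Z)) ≤ cov r (P + Z) := by
    simp only [cov_eq]; exact_mod_cast h1
  have h3 : ∑ p ∈ P, cov r Z ≤ ∑ p ∈ P, 3 * cov r ({p} + Z) := by
    refine Finset.sum_le_sum fun p _ => cov_translate hr _ _ p ?_
    intro y hy
    rw [add_comm y p]
    exact Finset.add_mem_add (Finset.mem_singleton_self p) hy
  rw [Finset.sum_const, nsmul_eq_mul, ← Finset.mul_sum] at h3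
  linarith

theorem sep_int {r q l : ℝ} (hr : 0 < r) (hq : 0 < q) (Y Z : Finset ℝ) (m : ℕ) (hm : 1 ≤ m)
    (hZ : ∀ z ∈ Z, ∀ z' ∈ Z, |z - z'| ≤ l) (hl : l + r ≤ ((m : ℝ) - 1) * q) :
    cov q Y * cov r Z ≤ 3 * m * cov r (Y + Z) := by
  obtain ⟨P, hP, hc, hs⟩ := rep_exists q hq Y m hm
  have h1 := sep_mul hr P Z (by
    intro p hp p' hp' hne z hz z' hz'
    have h1 := hs p hp p' hp' hne
    have h2 := hZ z hz z' hz'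
    have h3 : |p - p'| ≤ |p + z - (p' + z')| + |z - z'| := by
      have : p - p' = (p + z - (p' + z')) - (z - z') := by ring
      rw [this]; exact abs_sub _ _
    linarith)
  have h2 : cov r (P + Z) ≤ cov r (Y + Z) := cov_mono (Finset.add_subset_add_right hP)
  calc cov q Y * cov r Z ≤ m * (P.card : ℝ) * cov r Z := by
        gcongr; exact cov_nonneg _ _
    _ = m * ((P.card : ℝ) * cov r Z) := by ring
    _ ≤ m * (3 * cov r (Y + Z)) := by
        have := h1.trans (mul_le_mul_of_nonneg_left h2 (by norm_num : (0:ℝ) ≤ 3))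
        exact mul_le_mul_of_nonneg_left this (Nat.cast_nonneg _)
    _ = _ := by ring

theorem piece_exists (r q : ℝ) (hq : 0 < q) (A : Finset ℝ) (hA : A.Nonempty) :
    ∃ A' ⊆ A, A'.Nonempty ∧ (∀ a ∈ A', ∀ a' ∈ A', |a - a'| ≤ q) ∧
      cov r A ≤ cov q A * cov r A' := by
  obtain ⟨k, hk, hmax⟩ := Finset.exists_max_image (flo q A)
    (fun k => cov r (A.filter (fun a => ⌊a / q⌋ = k))) (flo_nonempty hA)
  refine ⟨A.filter (fun a => ⌊a / q⌋ = k), Finset.filter_subset _ _, ?_, ?_, ?_⟩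
  · obtain ⟨a, ha, rfl⟩ := Finset.mem_image.1 hk
    exact ⟨a, Finset.mem_filter.2 ⟨ha, rfl⟩⟩
  · intro a ha a' ha'
    have h1 := (Finset.mem_filter.1 ha).2
    have h2 := (Finset.mem_filter.1 ha').2
    have h3 := Int.abs_sub_lt_one_of_floor_eq_floor (h1.trans h2.symm)
    rw [← sub_div, abs_div, abs_of_pos hq, div_lt_one hq] at h3
    exact h3.le
  · have hsub : flo r A ⊆ (flo q A).biUnion
        (fun k => flo r (A.filter (fun a => ⌊a / q⌋ = k))) := by
      intro j hj
      obtain ⟨a, ha, rfl⟩ := Finset.mem_image.1 hj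
      exact Finset.mem_biUnion.2 ⟨⌊a / q⌋, Finset.mem_image_of_mem _ ha,
        Finset.mem_image_of_mem _ (Finset.mem_filter.2 ⟨ha, rfl⟩)⟩
    have h1 := (Finset.card_le_card hsub).trans Finset.card_biUnion_le
    have h2 : cov r A ≤ ∑ k ∈ flo q A, cov r (A.filter (fun a => ⌊a / q⌋ = k)) := by
      simp only [cov_eq]; exact_mod_cast h1
    refine h2.trans ((Finset.sum_le_sum hmax).trans ?_)
    rw [Finset.sum_const, nsmul_eq_mul, cov_eq q A]


/-- `x` is a multiplier that adding `xA` costs at most `K` compared with adding `A` -/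
def Good (A : Finset ℝ) (D K x : ℝ) : Prop :=
  ∀ r, D ≤ r → ∀ C : Finset ℝ, cov r (x • A + C) ≤ K * cov r (A + C)

theorem Good.mono {A : Finset ℝ} {D K D' K' x : ℝ} (h : Good A D K x) (hD : D ≤ D')
    (hK : K ≤ K') : Good A D' K' x := fun r hr C =>
  (h r (hD.trans hr) C).trans (mul_le_mul_of_nonneg_right hK (cov_nonneg _ _))

theorem trans_scale {δ K : ℝ} (hδ : 0 < δ) {A B : Finset ℝ} (hA : A.Nonempty)
    (h : cov δ (A + B + A) ≤ K * cov δ A) {r : ℝ} (hr : δ ≤ r) :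
    cov r (A + B) ≤ 9 * K * cov r A := by
  have hr0 : 0 < r := hδ.trans_le hr
  obtain ⟨A', hA', hne, hd, hp⟩ := piece_exists δ r hr0 A hA
  have h1 := sep_int (l := r) hδ hr0 (A + B) A' 3 (by norm_num) hd (by push_cast; linarith)
  have h2 : cov δ (A + B + A') ≤ cov δ (A + B + A) := cov_mono (Finset.add_subset_add_left hA')
  have hK : 0 ≤ K := by
    have := cov_pos (r := δ) hA
    have h0 := cov_nonneg δ (A + B + A)
    by_contra hK
    push Not at hK
    nlinarith
  have h3 : cov r (A + B) * cov δ A' ≤ 9 * K * cov r A * cov δ A' := by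
    calc _ ≤ 3 * (3 : ℕ) * cov δ (A + B + A') := h1
      _ = 9 * cov δ (A + B + A') := by push_cast; ring
      _ ≤ 9 * (K * (cov r A * cov δ A')) := by
          have := mul_le_mul_of_nonneg_left hp hK
          linarith
      _ = _ := by ring
  exact le_of_mul_le_mul_right h3 (lt_of_lt_of_le one_pos (cov_pos hne))

theorem good_one (A : Finset ℝ) (D : ℝ) : Good A D 1 1 := by
  intro r _ C
  rw [one_smul, one_mul]

theorem good_zero {A : Finset ℝ} (hA : A.Nonempty) {D : ℝ} (hD : 0 < D) : Good A D 3 0 := by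
  intro r hr C
  obtain ⟨a, ha⟩ := hA
  refine cov_translate (hD.trans_le hr) _ _ a ?_
  intro y hy
  obtain ⟨z, hz, c, hc, rfl⟩ := Finset.mem_add.1 hy
  obtain ⟨a', _, rfl⟩ := Finset.mem_smul_finset.1 hz
  rw [zero_smul, zero_add, add_comm c a]
  exact Finset.add_mem_add ha hc

theorem Good.add {A : Finset ℝ} {D K K' K1 x y : ℝ} (hK : 0 ≤ K) (hK' : 0 ≤ K')
    (h1 : ∀ r, D ≤ r → ∀ C : Finset ℝ, cov r (A + A + C) ≤ K1 * cov r (A + C))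
    (hx : Good A D K x) (hy : Good A D K' y) : Good A D (K * K' * K1) (x + y) := by
  intro r hr C
  have hs : (x + y) • A + C ⊆ x • A + (y • A + C) := by
    intro z hz
    obtain ⟨u, hu, c, hc, rfl⟩ := Finset.mem_add.1 hz
    obtain ⟨a, ha, rfl⟩ := Finset.mem_smul_finset.1 hu
    rw [add_smul, add_assoc]
    exact Finset.add_mem_add (Finset.smul_mem_smul_finset ha)
      (Finset.add_mem_add (Finset.smul_mem_smul_finset ha) hc)
  calc _ ≤ cov r (x • A + (y • A + C)) := cov_mono hs
    _ ≤ K * cov r (A + (y • A + C)) := hx r hr _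
    _ = K * cov r (y • A + (A + C)) := by rw [add_left_comm]
    _ ≤ K * (K' * cov r (A + (A + C))) := by gcongr; exact hy r hr _
    _ ≤ K * (K' * (K1 * cov r (A + C))) := by
        gcongr; rw [← add_assoc]; exact h1 r hr C
    _ = _ := by ring

theorem Good.mul {A : Finset ℝ} (hA : A.Nonempty) {D K K' B x y : ℝ} (hD : 0 < D) (hB : 1 ≤ B)
    (hxB : |x| ≤ B) (hK : 1 ≤ K) (hK' : 1 ≤ K')
    (hx : Good A D K x) (hy : Good A D K' y) : Good A (B * D) (9 * K * K') (x * y) := by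
  have hBD : D ≤ B * D := by nlinarith
  rcases eq_or_ne x 0 with rfl | hx0
  · rw [zero_mul]
    exact (good_zero hA hD).mono hBD (by nlinarith)
  intro r hr C
  have hr0 : 0 < r := by linarith
  have hxa : 0 < |x| := abs_pos.2 hx0
  have hs : (x * y) • A + C = x • (y • A + x⁻¹ • C) := by
    rw [smul_add, smul_smul, smul_smul, mul_inv_cancel₀ hx0, one_smul]
  have hs2 : A + x⁻¹ • C = x⁻¹ • (x • A + C) := by
    rw [smul_add, smul_smul, inv_mul_cancel₀ hx0, one_smul]
  have hrx : r = |x| * (r / |x|) := by field_simp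
  have hrx2 : r / |x| = |x⁻¹| * r := by rw [abs_inv]; field_simp
  have hDr : D ≤ r / |x| := by
    rw [le_div_iff₀ hxa]; nlinarith
  have hq : 0 < r / |x| := by positivity
  have a1 : cov r ((x * y) • A + C) ≤ 3 * cov (r / |x|) (y • A + x⁻¹ • C) := by
    rw [hs]
    have := cov_smul_abs hx0 hq (y • A + x⁻¹ • C)
    rwa [← hrx] at this
  have a2 := hy (r / |x|) hDr (x⁻¹ • C)
  have a3 : cov (r / |x|) (A + x⁻¹ • C) ≤ 3 * cov r (x • A + C) := by
    rw [hs2, hrx2]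
    exact cov_smul_abs (inv_ne_zero hx0) hr0 _
  have a4 := hx r (hBD.trans hr) C
  calc _ ≤ 3 * cov (r / |x|) (y • A + x⁻¹ • C) := a1
    _ ≤ 3 * (K' * cov (r / |x|) (A + x⁻¹ • C)) := by gcongr
    _ ≤ 3 * (K' * (3 * (K * cov r (A + C)))) := by gcongr; linarith
    _ = _ := by ring

/-- base package -/
def Base (A : Finset ℝ) (δ K : ℝ) (X : Finset ℝ) : Prop :=
  A.Nonempty ∧ 0 < δ ∧ 100 ≤ K ∧ (∀ x ∈ X, 0 ≤ x ∧ x ≤ 1) ∧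
  (∀ r, δ ≤ r → ∀ C : Finset ℝ, cov r (A + A + C) ≤ K ^ 30 * cov r (A + C)) ∧
  ∀ x ∈ X, Good A δ (K ^ 30) x

theorem base_of {A X : Finset ℝ} {δ K x0 : ℝ} (hA : A.Nonempty) (hδ : 0 < δ) (hK : 100 ≤ K)
    (hX : ∀ x ∈ X, 0 ≤ x ∧ x ≤ 1) (hx0 : x0 ∈ X) (hx0K : 1 / K ≤ x0)
    (h : ∀ x ∈ X, cov δ (A + x • A) ≤ K * cov δ A) : Base A δ K X := by
  have hK0 : 0 < K := by linarith
  have hx0' : 0 < x0 := lt_of_lt_of_le (by positivity) hx0K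
  have hNA := cov_pos (r := δ) hA
  have e1 : cov δ A ≤ 3 * K * cov δ (x0 • A) := by
    have h1 := cov_fine (r := x0 * δ) (r' := δ) (by positivity) hδ (x0 • A)
    rw [cov_smul_pos hx0'] at h1
    have h2 : δ / (x0 * δ) ≤ K := by
      rw [div_le_iff₀ (by positivity)]
      rw [div_le_iff₀ hK0] at hx0K
      nlinarith
    refine h1.trans ?_
    gcongr
    · exact cov_nonneg _ _
    · linarith
  have e2 : cov δ (A + A) ≤ 24 * K ^ 3 * cov δ A := by
    have h1 := ruzsa_cov (r := δ) A (x0 • A) A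
    have h2 := h x0 hx0
    rw [add_comm (x0 • A) A] at h1
    have h3 : cov δ (A + x0 • A) * cov δ (A + x0 • A) ≤ (K * cov δ A) * (K * cov δ A) := by
      have := cov_nonneg δ (A + x0 • A)
      gcongr
    have h4 : cov δ (A + A) * cov δ A ≤ 24 * K ^ 3 * cov δ A * cov δ A := by
      calc _ ≤ cov δ (A + A) * (3 * K * cov δ (x0 • A)) := by
            gcongr; exact cov_nonneg _ _
        _ = 3 * K * (cov δ (A + A) * cov δ (x0 • A)) := by ring
        _ ≤ 3 * K * (8 * ((K * cov δ A) * (K * cov δ A))) :=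
            mul_le_mul_of_nonneg_left (by linarith) (by positivity)
        _ = _ := by ring
    exact le_of_mul_le_mul_right h4 (by linarith)
  have e3 : cov δ (A + A) ≤ K ^ 4 * cov δ A := by
    refine e2.trans ?_
    gcongr
    have : K ^ 4 = K * K ^ 3 := by ring
    rw [this]; gcongr; linarith
  have hp : ∀ n : ℕ, 0 < K ^ n := fun n => by positivity
  have e4 : ∀ C : Finset ℝ, cov δ (A + A + C) ≤ 32 * K ^ 8 * cov δ (A + C) := by
    intro C
    have := absorb hA (hp 4).le e3 C
    calc _ ≤ _ := this
      _ = _ := by ring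
  have e5 : ∀ r, δ ≤ r → cov r (A + A) ≤ 288 * K ^ 12 * cov r A := by
    intro r hr
    have h1 : cov δ (A + A + A) ≤ 32 * K ^ 12 * cov δ A := by
      calc _ ≤ _ := e4 A
        _ ≤ 32 * K ^ 8 * (K ^ 4 * cov δ A) := by gcongr
        _ = _ := by ring
    have := trans_scale hδ hA h1 hr
    calc _ ≤ _ := this
      _ = _ := by ring
  have k2 : (10000 : ℝ) ≤ K ^ 2 := by nlinarith
  have k4 : (100000000 : ℝ) ≤ K ^ 4 := by nlinarith
  refine ⟨hA, hδ, hK, hX, ?_, ?_⟩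
  · intro r hr C
    have h1 := absorb hA (by positivity) (e5 r hr) C
    refine h1.trans ?_
    gcongr
    · exact cov_nonneg _ _
    calc 32 * (288 * K ^ 12) ^ 2 = 2654208 * K ^ 24 := by ring
      _ ≤ K ^ 4 * K ^ 24 := by gcongr; linarith
      _ ≤ K ^ 4 * K ^ 26 := by gcongr <;> linarith
      _ = K ^ 30 := by ring
  · intro x hx r hr C
    have h1 : cov δ (A + x • A + A) ≤ 32 * K ^ 9 * cov δ A := by
      have : A + x • A + A = A + A + x • A := by abel
      rw [this]
      calc _ ≤ _ := e4 _
        _ ≤ 32 * K ^ 8 * (K * cov δ A) := by gcongr; exact h x hx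
        _ = _ := by ring
    have h2 := trans_scale hδ hA h1 hr
    have h3 := swap hA (by positivity) h2 C
    refine h3.trans ?_
    gcongr
    · exact cov_nonneg _ _
    calc 8 * (9 * (32 * K ^ 9)) = 2304 * K ^ 9 := by ring
      _ ≤ K ^ 4 * K ^ 9 := by gcongr; linarith
      _ ≤ K ^ 4 * K ^ 26 := by gcongr <;> linarith
      _ = K ^ 30 := by ring

theorem Base.neg_one {A X : Finset ℝ} {δ K : ℝ} (h : Base A δ K X) : Good A δ (K ^ 61) (-1) := by
  obtain ⟨hA, hδ, hK, -, h1, -⟩ := h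
  intro r hr C
  have hK0 : 0 < K := by linarith
  have h2 := h1 r hr {0}
  have e0 : A + A + {0} = A + A := by rw [Finset.singleton_zero, add_zero]
  have e0' : A + {0} = A := by rw [Finset.singleton_zero, add_zero]
  rw [e0, e0'] at h2
  have h3 := cov_sub_self (r := r) A
  have hc : 0 < cov r A := lt_of_lt_of_le one_pos (cov_pos hA)
  have h0 := cov_nonneg r (A + A)
  have h4 : cov r (A + (-1 : ℝ) • A) ≤ 12 * K ^ 60 * cov r A := by
    have : cov r (A + (-1 : ℝ) • A) * cov r A ≤ 12 * K ^ 60 * cov r A * cov r A := by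
      calc _ ≤ _ := h3
        _ ≤ 12 * (K ^ 30 * cov r A) ^ 2 := by gcongr
        _ = _ := by ring
    exact le_of_mul_le_mul_right this hc
  have h5 := swap hA (by positivity) h4 C
  refine h5.trans ?_
  gcongr
  · exact cov_nonneg _ _
  calc 8 * (12 * K ^ 60) = 96 * K ^ 60 := by ring
    _ ≤ K * K ^ 60 := by gcongr; linarith
    _ = _ := by ring

/-- iterated polynomial expansions of `X ∪ {0,1}` -/
noncomputable def Tit (X : Finset ℝ) : ℕ → Finset ℝ
  | 0 => X ∪ {0, 1}
  | k + 1 => Tit X k + Tit X k * Tit X k - Tit X k * Tit X k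

/-- bounds for `Tit` -/
def Bd : ℕ → ℝ
  | 0 => 1
  | k + 1 => 3 * Bd k ^ 2

theorem one_le_Bd : ∀ k, 1 ≤ Bd k
  | 0 => le_rfl
  | k + 1 => by
    have := one_le_Bd k
    simp only [Bd]; nlinarith

theorem mem_Tit_succ {X : Finset ℝ} {k : ℕ} {a b c d e : ℝ} (ha : a ∈ Tit X k) (hb : b ∈ Tit X k)
    (hc : c ∈ Tit X k) (hd : d ∈ Tit X k) (he : e ∈ Tit X k) : a + b * c - d * e ∈ Tit X (k + 1) :=
  Finset.sub_mem_sub (Finset.add_mem_add ha (Finset.mul_mem_mul hb hc)) (Finset.mul_mem_mul hd he)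

theorem zero_one_mem_Tit (X : Finset ℝ) : ∀ k, (0 : ℝ) ∈ Tit X k ∧ (1 : ℝ) ∈ Tit X k
  | 0 => by simp [Tit]
  | k + 1 => by
    obtain ⟨h0, h1⟩ := zero_one_mem_Tit X k
    constructor
    · simpa using mem_Tit_succ h0 h0 h0 h0 h0
    · simpa using mem_Tit_succ h1 h0 h0 h0 h0

theorem Tit_mono_succ (X : Finset ℝ) (k : ℕ) : Tit X k ⊆ Tit X (k + 1) := by
  intro x hx
  obtain ⟨h0, h1⟩ := zero_one_mem_Tit X k
  simpa using mem_Tit_succ hx h0 h0 h0 h0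

theorem Tit_mono (X : Finset ℝ) {k l : ℕ} (h : k ≤ l) : Tit X k ⊆ Tit X l := by
  induction h with
  | refl => exact subset_rfl
  | step _ ih => exact ih.trans (Tit_mono_succ X _)

theorem Tit_succ_elim {X : Finset ℝ} {k : ℕ} {x : ℝ} (h : x ∈ Tit X (k + 1)) :
    ∃ a ∈ Tit X k, ∃ b ∈ Tit X k, ∃ c ∈ Tit X k, ∃ d ∈ Tit X k, ∃ e ∈ Tit X k,
      x = a + b * c - d * e := by
  obtain ⟨u, hu, v, hv, rfl⟩ := Finset.mem_sub.1 h
  obtain ⟨a, ha, w, hw, rfl⟩ := Finset.mem_add.1 hu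
  obtain ⟨b, hb, c, hc, rfl⟩ := Finset.mem_mul.1 hw
  obtain ⟨d, hd, e, he, rfl⟩ := Finset.mem_mul.1 hv
  exact ⟨a, ha, b, hb, c, hc, d, hd, e, he, rfl⟩

theorem Tit_bd {X : Finset ℝ} (hX : ∀ x ∈ X, 0 ≤ x ∧ x ≤ 1) :
    ∀ k, ∀ x ∈ Tit X k, |x| ≤ Bd k
  | 0 => by
    intro x hx
    simp only [Tit, Finset.mem_union, Finset.mem_insert, Finset.mem_singleton] at hx
    simp only [Bd]
    rcases hx with h | rfl | rfl
    · rw [abs_of_nonneg (hX x h).1]; exact (hX x h).2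
    · simp
    · simp
  | k + 1 => by
    intro x hx
    have ih := Tit_bd hX k
    have h1 := one_le_Bd k
    obtain ⟨a, ha, b, hb, c, hc, d, hd, e, he, rfl⟩ := Tit_succ_elim hx
    have e1 : |b * c| ≤ Bd k * Bd k := by
      rw [abs_mul]; gcongr; exacts [ih b hb, ih c hc]
    have e2 : |d * e| ≤ Bd k * Bd k := by
      rw [abs_mul]; gcongr; exacts [ih d hd, ih e he]
    have e3 := ih a ha
    simp only [Bd]
    calc |a + b * c - d * e| ≤ |a| + |b * c| + |d * e| := by
          refine (abs_sub _ _).trans ?_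
          gcongr; exact abs_add_le _ _
      _ ≤ _ := by nlinarith

theorem good_Tit (k : ℕ) : ∃ E : ℕ, ∃ D : ℝ, 1 ≤ D ∧ ∀ (A X : Finset ℝ) (δ K : ℝ), Base A δ K X →
    ∀ x ∈ Tit X k, Good A (D * δ) (K ^ E) x := by
  induction k with
  | zero =>
    refine ⟨30, 1, le_rfl, ?_⟩
    intro A X δ K hb x hx
    obtain ⟨hA, hδ, hK, hX, h1, h2⟩ := hb
    have hk1 : 3 ≤ K ^ 30 := by
      calc (3 : ℝ) ≤ K := by linarith
        _ ≤ K ^ 30 := le_self_pow₀ (by linarith) (by norm_num)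
    rw [one_mul]
    simp only [Tit, Finset.mem_union, Finset.mem_insert, Finset.mem_singleton] at hx
    rcases hx with h | rfl | rfl
    · exact h2 x h
    · exact (good_zero hA hδ).mono le_rfl hk1
    · exact (good_one A δ).mono le_rfl (by linarith)
  | succ k ih =>
    obtain ⟨E, D, hD, ih⟩ := ih
    refine ⟨5 * E + 125, Bd k * D, ?_, ?_⟩
    · have := one_le_Bd k
      nlinarith
    intro A X δ K hb x hx
    have ih := ih A X δ K hb
    have hneg := hb.neg_one
    obtain ⟨hA, hδ, hK, hX, h1, h2⟩ := hb
    have hB := one_le_Bd k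
    have hbd := Tit_bd hX k
    have hK1 : 1 ≤ K := by linarith
    have hDδ : 0 < D * δ := by positivity
    have hD1 : δ ≤ D * δ := by nlinarith
    have hD2 : D * δ ≤ Bd k * D * δ := by rw [mul_assoc]; nlinarith
    have hpow : ∀ n : ℕ, 1 ≤ K ^ n := fun n => one_le_pow₀ hK1
    have hpow0 : ∀ n : ℕ, 0 < K ^ n := fun n => by positivity
    obtain ⟨a, ha, b, hb, c, hc, d, hd, e, he, rfl⟩ := Tit_succ_elim hx
    have prod : ∀ b ∈ Tit X k, ∀ c ∈ Tit X k, Good A (Bd k * D * δ) (K ^ (2 * E + 1)) (b * c) := by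
      intro b hb c hc
      refine (Good.mul hA hDδ hB (hbd b hb) (hpow E) (hpow E) (ih b hb) (ih c hc)).mono
        (by rw [mul_assoc]) ?_
      calc 9 * K ^ E * K ^ E = 9 * K ^ (2 * E) := by ring
        _ ≤ K * K ^ (2 * E) := by gcongr; linarith
        _ = _ := by ring
    have hBD : 0 < Bd k * D * δ := by positivity
    have n1 : Good A (Bd k * D * δ) (K ^ (2 * E + 63)) (-1 * (d * e)) := by
      refine (Good.mul hA hBD (le_refl 1) (by simp) (hpow 61) (hpow (2 * E + 1))
        (hneg.mono (hD1.trans hD2) le_rfl) (prod d hd e he)).mono (by rw [one_mul]) ?_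
      calc 9 * K ^ 61 * K ^ (2 * E + 1) = 9 * K ^ (2 * E + 62) := by ring
        _ ≤ K * K ^ (2 * E + 62) := by gcongr; linarith
        _ = _ := by ring
    have h1' : ∀ r, Bd k * D * δ ≤ r → ∀ C : Finset ℝ, cov r (A + A + C) ≤ K ^ 30 * cov r (A + C) :=
      fun r hr => h1 r ((hD1.trans hD2).trans hr)
    have s1 := Good.add (hpow0 _).le (hpow0 _).le h1' ((ih a ha).mono hD2 le_rfl) (prod b hb c hc)
    have s2 := Good.add (by positivity) (hpow0 _).le h1' s1 n1
    have e1 : a + b * c + -1 * (d * e) = a + b * c - d * e := by ring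
    rw [e1] at s2
    refine s2.mono le_rfl ?_
    calc K ^ E * K ^ (2 * E + 1) * K ^ 30 * K ^ (2 * E + 63) * K ^ 30 = K ^ (5 * E + 124) := by ring
      _ ≤ K ^ (5 * E + 125) := pow_le_pow_right₀ hK1 (by omega)


theorem star_step {κ C : ℝ} (hκ : 0 < κ) (hκ1 : κ ≤ 1) (hC : 0 ≤ C) {J L U w : ℕ} {f : ℕ → ℝ}
    (hL : 8 * (J : ℝ) ≤ κ * L)
    (h0 : ∀ n, 0 ≤ f n) (h1 : ∀ n, n ≤ 2 * U → f n ≤ n + 2)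
    (h2 : ∀ n : ℕ, n ≤ 2 * U → κ * n - 1 ≤ f n)
    (hgap : ∀ w : ℕ, 1 ≤ w → ∀ y, J * w ≤ y → y ≤ U → ∃ v ≤ w, f w + f y + f v ≤ f (v + y) + C)
    (hw : 2 * (C + 2) ≤ κ * w) (hw1 : 1 ≤ w) (hwU : (J + L + 1) * w ≤ U) {g : ℝ}
    (hg : g * w ≤ f w) :
    ∃ y, w ≤ y ∧ y ≤ (J + L + 1) * w ∧ (g + κ / 16) * y ≤ f y := by
  have hwU' : w ≤ U := by nlinarith
  have hwr : (1 : ℝ) ≤ w := by exact_mod_cast hw1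
  have hfw : κ * w - 1 ≤ f w := h2 w (by omega)
  -- normalise: g is the actual slope
  obtain ⟨G, hG, hgG⟩ : ∃ G, G * w = f w ∧ g ≤ G := by
    refine ⟨f w / w, by field_simp, ?_⟩
    rw [le_div_iff₀ (by linarith)]; exact hg
  have hG1 : κ / 2 ≤ G := by
    have : κ / 2 * w ≤ G * w := by nlinarith
    exact le_of_mul_le_mul_right this (by linarith)
  have hG3 : G ≤ 3 := by
    have := h1 w (by omega)
    have : G * w ≤ 3 * w := by nlinarith
    exact le_of_mul_le_mul_right this (by linarith)
  have key : ∀ n, n ≤ L * w → ∃ y, J * w + n ≤ y ∧ y ≤ J * w + n + w ∧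
      ((y : ℝ) - J * w) * (G + κ / 2) ≤ f y := by
    intro n
    induction n with
    | zero =>
      intro _
      exact ⟨J * w, by omega, by omega, by push_cast; simpa using h0 _⟩
    | succ n ih =>
      intro hn
      obtain ⟨y, hy1, hy2, hy3⟩ := ih (by omega)
      rcases Nat.lt_or_ge (J * w + n) y with h | h
      · exact ⟨y, by omega, by omega, hy3⟩
      · have hy : y = J * w + n := by omega
        have hyU : y ≤ U := by nlinarith
        obtain ⟨v, hv, hvf⟩ := hgap w hw1 y (by omega) hyU
        have hv1 : 1 ≤ v := by
          rcases Nat.eq_zero_or_pos v with rfl | h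
          · exfalso
            have := h0 0
            rw [zero_add] at hvf
            linarith
          · exact h
        refine ⟨v + y, by omega, by omega, ?_⟩
        have hv2 : (v : ℝ) ≤ w := by exact_mod_cast hv
        have hfv := h2 v (by omega)
        push_cast
        have a1 : κ / 2 * ((w : ℝ) - v) ≤ G * (w - v) :=
          mul_le_mul_of_nonneg_right hG1 (by linarith)
        nlinarith
  obtain ⟨y, hy1, hy2, hy3⟩ := key (L * w) le_rfl
  refine ⟨y, ?_, ?_, ?_⟩
  · have : 1 ≤ J + L := by
      by_contra h
      have hJ : J = 0 := by omega
      have hL' : L = 0 := by omega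
      subst hJ; subst hL'
      obtain ⟨v, hv, hvf⟩ := hgap w hw1 0 (by omega) (by omega)
      have := h0 0
      have := h2 v (by omega)
      have hv0 := h0 v
      simp only [add_zero] at hvf
      linarith
    nlinarith
  · linarith
  · have hyr : ((J : ℝ) + L) * w ≤ y := by
      have : (J + L) * w ≤ y := by nlinarith
      exact_mod_cast this
    have hyw : 8 * ((J : ℝ) * w) ≤ κ * y := by
      have hJ0 : 0 ≤ (J : ℝ) * w := by positivity
      have a2 : κ * (L * w) ≤ κ * y := by
        apply mul_le_mul_of_nonneg_left _ hκ.le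
        nlinarith
      nlinarith
    have hy0 : (0 : ℝ) ≤ y := Nat.cast_nonneg _
    have hJ0 : 0 ≤ (J : ℝ) * w := by positivity
    have a3 : (J : ℝ) * w * (G + κ / 2) ≤ (J : ℝ) * w * (7 / 2) := by
      apply mul_le_mul_of_nonneg_left _ hJ0; linarith
    have a4 : (g + κ / 16) * y ≤ (G + κ / 16) * y := by gcongr
    nlinarith

theorem star {κ : ℝ} (hκ : 0 < κ) (hκ1 : κ ≤ 1) {C : ℝ} (hC : 0 ≤ C) (J : ℕ) :
    ∃ U : ℕ, ∀ f : ℕ → ℝ, (∀ n, 0 ≤ f n) → (∀ n, n ≤ 2 * U → f n ≤ n + 2) →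
      (∀ n : ℕ, n ≤ 2 * U → κ * n - 1 ≤ f n) →
      ∃ w y : ℕ, 1 ≤ w ∧ J * w ≤ y ∧ y ≤ U ∧ ∀ v ≤ w, f (v + y) + C < f w + f y + f v := by
  set L := ⌈8 * (J : ℝ) / κ⌉₊
  have hL : 8 * (J : ℝ) ≤ κ * L := by
    have := Nat.le_ceil (8 * (J : ℝ) / κ)
    rw [div_le_iff₀ hκ] at this
    linarith
  set w0 := ⌈2 * (C + 2) / κ⌉₊
  have hw0 : 2 * (C + 2) ≤ κ * w0 := by
    have := Nat.le_ceil (2 * (C + 2) / κ)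
    rw [div_le_iff₀ hκ] at this
    linarith
  have hw01 : 1 ≤ w0 := Nat.ceil_pos.2 (by positivity)
  set I := ⌈64 / κ⌉₊
  have hI : 64 ≤ κ * I := by
    have := Nat.le_ceil (64 / κ)
    rw [div_le_iff₀ hκ] at this
    linarith
  set M := J + L + 1
  refine ⟨w0 * M ^ I, fun f h0 h1 h2 => ?_⟩
  by_contra hcon
  push Not at hcon
  have key : ∀ i ≤ I, ∃ w, w0 ≤ w ∧ w ≤ w0 * M ^ i ∧ (i * (κ / 16)) * w ≤ f w := by
    intro i
    induction i with
    | zero => intro _; exact ⟨w0, le_rfl, by simp, by simpa using h0 w0⟩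
    | succ i ih =>
      intro hi
      obtain ⟨w, hw1, hw2, hw3⟩ := ih (by omega)
      have hMp : M ^ (i + 1) ≤ M ^ I := Nat.pow_le_pow_right (by omega) hi
      obtain ⟨y, hy1, hy2, hy3⟩ := star_step hκ hκ1 hC (w := w) hL h0 h1 h2 (fun w hw y => hcon w y hw)
        (hw0.trans (by gcongr)) (by omega)
        (by
          calc M * w ≤ M * (w0 * M ^ i) := Nat.mul_le_mul_left _ hw2
            _ = w0 * M ^ (i + 1) := by ring
            _ ≤ _ := Nat.mul_le_mul_left _ hMp) hw3
      refine ⟨y, by omega, ?_, ?_⟩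
      · calc y ≤ M * w := hy2
          _ ≤ M * (w0 * M ^ i) := Nat.mul_le_mul_left _ hw2
          _ = w0 * M ^ (i + 1) := by ring
      · refine le_trans (le_of_eq ?_) hy3
        push_cast; ring
  obtain ⟨w, hw1, hw2, hw3⟩ := key I le_rfl
  have h4 := h1 w (by omega)
  have hwr : (1 : ℝ) ≤ w := by exact_mod_cast hw01.trans hw1
  have : 4 * (w : ℝ) ≤ I * (κ / 16) * w := by
    gcongr; linarith
  linarith


theorem sub_mem_Tit {X : Finset ℝ} {j : ℕ} {a c : ℝ} (ha : a ∈ Tit X j) (hc : c ∈ Tit X j) :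
    a - c ∈ Tit X (j + 1) := by
  obtain ⟨h0, h1⟩ := zero_one_mem_Tit X j
  simpa using mem_Tit_succ ha h0 h0 h1 hc

/-- the closed case: quotients are dense -/
theorem dense_case {T : Finset ℝ} (h0 : (0 : ℝ) ∈ T) (h1 : (1 : ℝ) ∈ T) {ρ1 ρ2 : ℝ}
    (hρ1 : 0 < ρ1) (hρ1' : ρ1 ≤ 1 / 2) (hρ2 : ρ2 ≤ 1) (hρ2' : 0 < ρ2)
    (hcl : ∀ u ∈ T - T, ∀ s ∈ T - T, ρ2 ≤ s → |u / s| ≤ 2 → ∀ e : ℝ, (e = 0 ∨ e = 1) →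
      ∃ u' ∈ T - T, ∃ s' ∈ T - T, ρ2 ≤ s' ∧ |(u / s + e) / 2 - u' / s'| ≤ ρ1)
    {t : ℝ} (ht : 0 ≤ t) (ht1 : t ≤ 1) :
    ∃ u ∈ T - T, ∃ s ∈ T - T, ρ2 ≤ s ∧ |u - t * s| ≤ 4 * ρ1 * s := by
  have z0 : (0 : ℝ) ∈ T - T := by simpa using Finset.sub_mem_sub h0 h0
  have z1 : (1 : ℝ) ∈ T - T := by simpa using Finset.sub_mem_sub h1 h0
  have key : ∀ n : ℕ, ∀ k : ℕ, k ≤ 2 ^ n →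
      ∃ u ∈ T - T, ∃ s ∈ T - T, ρ2 ≤ s ∧ |(k : ℝ) / 2 ^ n - u / s| ≤ 2 * ρ1 := by
    intro n
    induction n with
    | zero =>
      intro k hk
      have : k = 0 ∨ k = 1 := by rw [pow_zero] at hk; omega
      rcases this with rfl | rfl
      · exact ⟨0, z0, 1, z1, hρ2, by simp; exact hρ1.le⟩
      · exact ⟨1, z1, 1, z1, hρ2, by simp; exact hρ1.le⟩
    | succ n ih =>
      intro k hk
      have : ∃ k' e : ℕ, k' ≤ 2 ^ n ∧ (e = 0 ∨ e = 1) ∧ k = k' + e * 2 ^ n := by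
        rcases Nat.lt_or_ge k (2 ^ n) with h | h
        · exact ⟨k, 0, h.le, Or.inl rfl, by simp⟩
        · refine ⟨k - 2 ^ n, 1, ?_, Or.inr rfl, by omega⟩
          rw [pow_succ] at hk; omega
      obtain ⟨k', e, hk', he, rfl⟩ := this
      obtain ⟨u, hu, s, hs, hss, hus⟩ := ih k' hk'
      have hb : |u / s| ≤ 2 := by
        have a1 : (k' : ℝ) / 2 ^ n ≤ 1 := by
          rw [div_le_one (by positivity)]; exact_mod_cast hk'
        have a2 : 0 ≤ (k' : ℝ) / 2 ^ n := by positivity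
        rw [abs_le] at hus ⊢
        constructor <;> linarith
      obtain ⟨u', hu', s', hs', hss', hus'⟩ := hcl u hu s hs hss hb e
        (by rcases he with rfl | rfl <;> simp)
      refine ⟨u', hu', s', hs', hss', ?_⟩
      have e1 : ((k' + e * 2 ^ n : ℕ) : ℝ) / 2 ^ (n + 1) - u' / s'
          = (k' / 2 ^ n - u / s) / 2 + ((u / s + e) / 2 - u' / s') := by
        push_cast; rw [pow_succ]; field_simp; ring
      rw [e1]
      refine (abs_add_le _ _).trans ?_
      rw [abs_div, abs_two]
      linarith
  obtain ⟨n, hn⟩ := exists_pow_lt_of_lt_one hρ1 (by norm_num : (1 / 2 : ℝ) < 1)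
  have hp : (0 : ℝ) < 2 ^ n := by positivity
  have hk : ⌊t * 2 ^ n⌋₊ ≤ 2 ^ n := by
    have : t * 2 ^ n ≤ ((2 ^ n : ℕ) : ℝ) := by push_cast; nlinarith
    exact Nat.floor_le_of_le this
  obtain ⟨u, hu, s, hs, hss, hus⟩ := key n _ hk
  refine ⟨u, hu, s, hs, hss, ?_⟩
  have hs0 : 0 < s := by linarith
  have a1 := Nat.floor_le (show 0 ≤ t * 2 ^ n by positivity)
  have a2 := Nat.lt_floor_add_one (t * 2 ^ n)
  have a3 : |t - (⌊t * 2 ^ n⌋₊ : ℝ) / 2 ^ n| ≤ ρ1 := by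
    have e1 : t - (⌊t * 2 ^ n⌋₊ : ℝ) / 2 ^ n = (t * 2 ^ n - ⌊t * 2 ^ n⌋₊) * (1 / 2) ^ n := by
      rw [one_div, inv_pow]; field_simp
    rw [e1, abs_mul, abs_of_nonneg (by linarith), abs_of_pos (by positivity)]
    have : (t * 2 ^ n - ⌊t * 2 ^ n⌋₊) * (1 / 2) ^ n ≤ 1 * (1 / 2) ^ n := by
      gcongr; linarith
    linarith
  have a4 : |t - u / s| ≤ 3 * ρ1 := by
    have := abs_sub_le t ((⌊t * 2 ^ n⌋₊ : ℝ) / 2 ^ n) (u / s)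
    linarith
  have e2 : u - t * s = -(t - u / s) * s := by field_simp; ring
  rw [e2, abs_mul, abs_neg, abs_of_pos hs0]
  gcongr; linarith

theorem cov_bdd {r B : ℝ} (hr : 0 < r) (hB : 0 ≤ B) (T : Finset ℝ) (h : ∀ x ∈ T, |x| ≤ B) :
    cov r T ≤ 2 * B / r + 3 := by
  have h1 := cov_le (c := 0) hr hr hB (Y := T) (Z := {0})
    (fun y hy => ⟨0, by simp, by simpa using h y hy⟩)
  have h2 : cov r {0} = 1 := by simp [cov]
  rw [h2, mul_one] at h1
  refine h1.trans (le_of_eq ?_)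
  field_simp; ring

/-- the gap case: lower bound -/
theorem gap_lower {T : Finset ℝ} {ρ1 ρ2 t : ℝ} (hρ1 : 0 < ρ1) (hρ2 : 0 < ρ2)
    (hgap : ∀ u ∈ T - T, ∀ s ∈ T - T, ρ2 ≤ s → ρ1 < |t - u / s|) (ht : t ≠ 0) :
    cov ρ2 T * cov (ρ1 * ρ2) T ≤ 6 * cov (ρ1 * ρ2) (t • T + T) := by
  obtain ⟨P, hP, hc, hs⟩ := rep_exists ρ2 hρ2 T 2 (by norm_num)
  have hcard : (t • P).card = P.card := Finset.card_smul_finset₀ ht P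
  have h1 := sep_mul (r := ρ1 * ρ2) (by positivity) (t • P) T (by
    intro p hp p' hp' hne z hz z' hz'
    obtain ⟨a, ha, rfl⟩ := Finset.mem_smul_finset.1 hp
    obtain ⟨a', ha', rfl⟩ := Finset.mem_smul_finset.1 hp'
    have hne' : a ≠ a' := fun h => hne (by rw [h])
    have h1 := hs a ha a' ha' hne'
    push_cast at h1
    have aux : ∀ a ∈ T, ∀ a' ∈ T, ∀ z ∈ T, ∀ z' ∈ T, ρ2 ≤ a - a' →
        ρ1 * ρ2 ≤ |t * a + z - (t * a' + z')| := by
      intro a ha a' ha' z hz z' hz' h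
      have h2 := hgap (z' - z) (Finset.sub_mem_sub hz' hz) (a - a') (Finset.sub_mem_sub ha ha') h
      have h3 : 0 < a - a' := by linarith
      have e : t * a + z - (t * a' + z') = (t - (z' - z) / (a - a')) * (a - a') := by
        field_simp; ring
      rw [e, abs_mul, abs_of_pos h3]
      gcongr
    simp only [smul_eq_mul]
    rcases le_abs.1 (show ρ2 ≤ |a - a'| by linarith) with h | h
    · exact aux a (hP ha) a' (hP ha') z hz z' hz' h
    · rw [abs_sub_comm]
      exact aux a' (hP ha') a (hP ha) z' hz' z hz (by linarith))
  rw [hcard] at h1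
  have h2 : cov (ρ1 * ρ2) (t • P + T) ≤ cov (ρ1 * ρ2) (t • T + T) :=
    cov_mono (Finset.add_subset_add_right (Finset.smul_finset_subset_smul_finset hP))
  have h3 := cov_nonneg (ρ1 * ρ2) T
  push_cast at hc
  nlinarith

theorem gap_upper {X : Finset ℝ} (hX : ∀ x ∈ X, 0 ≤ x ∧ x ≤ 1) {j b v : ℕ} {u s e t r : ℝ}
    (hr : 0 < r) (hr1 : r ≤ 1)
    (hb : 10 * Bd j + 2 ≤ b)
    (hu : u ∈ Tit X j - Tit X j) (hs : s ∈ Tit X j - Tit X j) (he : e = 0 ∨ e = 1)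
    (hv : ((b : ℝ) ^ v)⁻¹ ≤ s) (hv2 : s ≤ b * ((b : ℝ) ^ v)⁻¹)
    (hus : |u / s| ≤ 2) (ht : t = (u / s + e) / 2) :
    cov ((b : ℝ) ^ v)⁻¹ (Tit X j) * cov r (t • Tit X j + Tit X j)
      ≤ 18 * (b : ℝ) ^ 2 * cov (((b : ℝ) ^ v)⁻¹ * r) (Tit X (j + 3)) := by
  set T := Tit X j with hT
  have hB := one_le_Bd j
  have hb0 : (0 : ℝ) < b := by linarith
  have hβ : 0 < ((b : ℝ) ^ v)⁻¹ := by positivity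
  set β := ((b : ℝ) ^ v)⁻¹
  have hs0 : 0 < s := by linarith
  obtain ⟨z0, z1⟩ := zero_one_mem_Tit X j
  have hbd := Tit_bd hX j
  have hu1 : u ∈ Tit X (j + 1) := by
    obtain ⟨a, ha, c, hc, rfl⟩ := Finset.mem_sub.1 hu
    exact sub_mem_Tit ha hc
  have hs1 : s ∈ Tit X (j + 1) := by
    obtain ⟨a, ha, c, hc, rfl⟩ := Finset.mem_sub.1 hs
    exact sub_mem_Tit ha hc
  set Y := (2 * s) • (t • T + T) with hY
  have hcY : cov (2 * s * r) Y = cov r (t • T + T) := cov_smul_pos (by positivity) _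
  have hYe : ∀ y ∈ Y, ∃ a ∈ T, ∃ c ∈ T, y = 2 * s * (t * a + c) := by
    intro y hy
    obtain ⟨x, hx, rfl⟩ := Finset.mem_smul_finset.1 hy
    obtain ⟨x1, hx1, c, hc, rfl⟩ := Finset.mem_add.1 hx
    obtain ⟨a, ha, rfl⟩ := Finset.mem_smul_finset.1 hx1
    exact ⟨a, ha, c, hc, rfl⟩
  have ht2 : |t| ≤ 3 / 2 := by
    rw [ht, abs_div, abs_two]
    have : |u / s + e| ≤ 3 := by
      refine (abs_add_le _ _).trans ?_
      rcases he with rfl | rfl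
      · rw [abs_zero]; linarith
      · rw [abs_one]; linarith
    linarith
  have hYb : ∀ y ∈ Y, |y| ≤ 5 * s * Bd j := by
    intro y hy
    obtain ⟨a, ha, c, hc, rfl⟩ := hYe y hy
    rw [abs_mul, abs_of_pos (by positivity)]
    have h1 : |t * a| ≤ 3 / 2 * Bd j := by
      rw [abs_mul]; gcongr; exact hbd a ha
    have h2 := abs_add_le (t * a) c
    have h3 := hbd c hc
    nlinarith
  have h1 := sep_int (r := 2 * s * r) (q := β) (l := 10 * s * Bd j) (by positivity) hβ T Y
    (b ^ 2 + 1) (by omega) (by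
      intro z hz z' hz'
      have := abs_sub z z'
      have := hYb z hz
      have := hYb z' hz'
      linarith) (by
      push_cast
      have : 10 * s * Bd j + 2 * s * r ≤ (10 * Bd j + 2) * s := by nlinarith
      have : (10 * Bd j + 2) * s ≤ b * (b * β) := by gcongr
      nlinarith)
  have hsub : T + Y ⊆ Tit X (j + 3) := by
    intro x hx
    obtain ⟨c0, hc0, y, hy, rfl⟩ := Finset.mem_add.1 hx
    obtain ⟨a, ha, c, hc, rfl⟩ := hYe y hy
    obtain ⟨y0, y1⟩ := zero_one_mem_Tit X (j + 1)
    have m1 : c0 + u * a ∈ Tit X (j + 2) := by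
      simpa using mem_Tit_succ (Tit_mono_succ X j hc0) hu1 (Tit_mono_succ X j ha) y0 y0
    have m2 : e * a + 2 * c ∈ Tit X (j + 2) := by
      have m3 : e * a + c ∈ Tit X (j + 1) := by
        rcases he with rfl | rfl
        · simpa using Tit_mono_succ X j hc
        · simpa using mem_Tit_succ ha hc z1 z0 z0
      have := mem_Tit_succ m3 (Tit_mono_succ X j hc) y1 y0 y0
      convert this using 1; ring
    have m4 := mem_Tit_succ m1 (Tit_mono_succ X _ hs1) m2 (zero_one_mem_Tit X (j + 2)).1
      (zero_one_mem_Tit X (j + 2)).1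
    convert m4 using 1
    rw [ht]; field_simp; ring
  have h2 : cov (2 * s * r) (T + Y) ≤ 3 * cov (β * r) (Tit X (j + 3)) :=
    (cov_mono hsub).trans (cov_coarse (by positivity) (by nlinarith) _)
  rw [hcY] at h1
  refine h1.trans ?_
  have hb1 : (1 : ℝ) ≤ b := by linarith
  push_cast
  calc 3 * ((b : ℝ) ^ 2 + 1) * cov (2 * s * r) (T + Y)
      ≤ 3 * ((b : ℝ) ^ 2 + b ^ 2) * (3 * cov (β * r) (Tit X (j + 3))) := by
        gcongr
        · exact cov_nonneg _ _
        · nlinarith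
    _ = _ := by ring


theorem Bd_mono {j k : ℕ} (h : j ≤ k) : Bd j ≤ Bd k := by
  induction h with
  | refl => exact le_rfl
  | step _ ih =>
    refine ih.trans ?_
    rename_i m _
    have := one_le_Bd m
    simp only [Bd]; nlinarith

/-- pigeonhole for monotone stages -/
theorem stage_pigeon (F : ℕ → ℕ → ℝ) (U : ℕ) (h0 : ∀ i n, 0 ≤ F i n) (hmono : ∀ i n, F i n ≤ F (i + 1) n)
    (I : ℕ) (hI : (2 * U + 1) ^ 2 < I)
    (hub : ∀ n ≤ 2 * U, F I n ≤ n + 1) :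
    ∃ i < I, ∀ n ≤ 2 * U, F (i + 1) n ≤ F i n + 1 := by
  by_contra hcon
  push Not at hcon
  have key : ∀ i ≤ I, (i : ℝ) ≤ ∑ n ∈ Finset.range (2 * U + 1), F i n := by
    intro i
    induction i with
    | zero => intro _; simpa using Finset.sum_nonneg fun n _ => h0 0 n
    | succ i ih =>
      intro hi
      have h1 := ih (by omega)
      obtain ⟨n0, hn0, hlt⟩ := hcon i (by omega)
      have h2 : ∑ n ∈ Finset.range (2 * U + 1), (F i n + if n = n0 then (1 : ℝ) else 0)
          ≤ ∑ n ∈ Finset.range (2 * U + 1), F (i + 1) n := by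
        refine Finset.sum_le_sum fun n _ => ?_
        split_ifs with h
        · rw [h]; exact hlt.le
        · rw [add_zero]; exact hmono i n
      rw [Finset.sum_add_distrib, Finset.sum_ite_eq' (Finset.range (2 * U + 1)) n0] at h2
      rw [if_pos (Finset.mem_range.2 (by omega))] at h2
      push_cast; linarith
  have h1 := key I le_rfl
  have h2 : ∑ n ∈ Finset.range (2 * U + 1), F I n ≤ ∑ n ∈ Finset.range (2 * U + 1), (2 * U + 1 : ℝ) := by
    refine Finset.sum_le_sum fun n hn => ?_
    have hn' : n ≤ 2 * U := by rw [Finset.mem_range] at hn; omega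
    have : (n : ℝ) ≤ 2 * U := by exact_mod_cast hn'
    linarith [hub n hn']
  rw [Finset.sum_const, Finset.card_range, nsmul_eq_mul] at h2
  have h3 : ((2 * U + 1 : ℕ) : ℝ) ^ 2 < I := by exact_mod_cast hI
  push_cast at h2 h3
  nlinarith

theorem ring_thm {κ : ℝ} (hκ : 0 < κ) (hκ1 : κ ≤ 1) (J : ℕ) (hJ : 2 ≤ J) :
    ∃ U k b0 : ℕ, ∀ b : ℕ, b0 ≤ b → ∀ X : Finset ℝ, (∀ x ∈ X, 0 ≤ x ∧ x ≤ 1) →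
      (∀ n : ℕ, n ≤ 2 * U → (b : ℝ) ^ (κ * n - 1) ≤ cov ((b : ℝ) ^ n)⁻¹ X) →
      ∃ w y : ℕ, 1 ≤ w ∧ J * w ≤ y ∧ y ≤ U ∧ ∀ t : ℝ, 0 ≤ t → t ≤ 1 →
        ∃ u ∈ Tit X k, ∃ s ∈ Tit X k, ((b : ℝ) ^ w)⁻¹ ≤ s ∧
          |u - t * s| ≤ 4 * ((b : ℝ) ^ (y - w))⁻¹ * s := by
  obtain ⟨U, hU⟩ := star hκ hκ1 (C := 4) (by norm_num) J
  set I := (2 * U + 1) ^ 2 + 1 with hIdef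
  refine ⟨U, 5 * I, ⌈10 * Bd (5 * I) + 200⌉₊, ?_⟩
  intro b hb X hX hcov
  have hbr : 10 * Bd (5 * I) + 200 ≤ (b : ℝ) := (Nat.le_ceil _).trans (by exact_mod_cast hb)
  have hBI := one_le_Bd (5 * I)
  have hb1 : (1 : ℝ) < b := by linarith
  have hb0 : (0 : ℝ) < b := by linarith
  have hTne : ∀ j, (Tit X j).Nonempty := fun j => ⟨0, (zero_one_mem_Tit X j).1⟩
  set F : ℕ → ℕ → ℝ := fun j n => Real.logb b (cov ((b : ℝ) ^ n)⁻¹ (Tit X j)) with hF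
  have hc1 : ∀ j n, 1 ≤ cov ((b : ℝ) ^ n)⁻¹ (Tit X j) := fun j n => cov_pos (hTne j)
  have hF0 : ∀ j n, 0 ≤ F j n := fun j n => Real.logb_nonneg hb1 (hc1 j n)
  have hFm : ∀ j k n, j ≤ k → F j n ≤ F k n := by
    intro j k n h
    exact Real.logb_le_logb_of_le hb1 (by linarith [hc1 j n]) (cov_mono (Tit_mono X h))
  have hFu : ∀ j ≤ 5 * I, ∀ n, F j n ≤ n + 1 := by
    intro j hj n
    have h1 := cov_bdd (r := ((b : ℝ) ^ n)⁻¹) (by positivity) (by linarith) (Tit X (5 * I)) (Tit_bd hX (5 * I))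
    refine (hFm j (5 * I) n hj).trans ?_
    have h2 : cov ((b : ℝ) ^ n)⁻¹ (Tit X (5 * I)) ≤ (b : ℝ) ^ (n + 1) := by
      refine h1.trans ?_
      rw [div_inv_eq_mul, pow_succ]
      have : (1 : ℝ) ≤ (b : ℝ) ^ n := one_le_pow₀ hb1.le
      nlinarith
    have h3 := Real.logb_le_logb_of_le hb1 (by linarith [hc1 (5 * I) n]) h2
    rw [Real.logb_pow, Real.logb_self_eq_one hb1] at h3
    push_cast at h3
    simp only [hF]; linarith
  obtain ⟨i, hi, hstage⟩ := stage_pigeon (fun i n => F (5 * i) n) U (fun i n => hF0 _ _)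
    (fun i n => hFm _ _ n (by omega)) I (by omega) (fun n _ => hFu _ le_rfl n)
  set j := 5 * i with hj
  have hstage' : ∀ n ≤ 2 * U, F (j + 3) n ≤ F j n + 1 := fun n hn =>
    (hFm (j + 3) (5 * (i + 1)) n (by omega)).trans (hstage n hn)
  obtain ⟨w, y, hw, hwy, hyU, hv⟩ := hU (F j) (hF0 j)
    (fun n _ => (hFu j (by omega) n).trans (by linarith)) (by
      intro n hn
      have h1 := (hcov n hn).trans (cov_mono (r := ((b : ℝ) ^ n)⁻¹)
        ((Finset.subset_union_left : X ⊆ Tit X 0).trans (Tit_mono X (Nat.zero_le j))))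
      have h2 := Real.logb_le_logb_of_le hb1 (by positivity) h1
      rwa [Real.logb_rpow hb0 hb1.ne'] at h2)
  refine ⟨w, y, hw, hwy, hyU, ?_⟩
  have hwy' : w < y := by nlinarith
  have hbw1 : ((b : ℝ) ^ w)⁻¹ ≤ 1 := inv_le_one_of_one_le₀ (one_le_pow₀ hb1.le)
  have hbw0 : 0 < ((b : ℝ) ^ w)⁻¹ := by positivity
  have hρ0 : 0 < ((b : ℝ) ^ (y - w))⁻¹ := by positivity
  have hρ1 : ((b : ℝ) ^ (y - w))⁻¹ ≤ 1 / 2 := by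
    rw [one_div]
    apply inv_anti₀ (by norm_num)
    calc (2 : ℝ) ≤ b := by linarith
      _ ≤ (b : ℝ) ^ (y - w) := le_self_pow₀ hb1.le (by omega)
  have hρρ : ((b : ℝ) ^ (y - w))⁻¹ * ((b : ℝ) ^ w)⁻¹ = ((b : ℝ) ^ y)⁻¹ := by
    rw [← mul_inv, ← pow_add]; congr 2; omega
  by_cases hcl : ∀ u ∈ Tit X j - Tit X j, ∀ s ∈ Tit X j - Tit X j, ((b : ℝ) ^ w)⁻¹ ≤ s → |u / s| ≤ 2 →
      ∀ e : ℝ, (e = 0 ∨ e = 1) → ∃ u' ∈ Tit X j - Tit X j, ∃ s' ∈ Tit X j - Tit X j,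
        ((b : ℝ) ^ w)⁻¹ ≤ s' ∧ |(u / s + e) / 2 - u' / s'| ≤ ((b : ℝ) ^ (y - w))⁻¹
  · intro t ht0 ht1
    obtain ⟨z0, z1⟩ := zero_one_mem_Tit X j
    obtain ⟨u, hu, s, hs, h1, h2⟩ := dense_case z0 z1 hρ0 hρ1 hbw1 hbw0 hcl ht0 ht1
    have hm : ∀ u ∈ Tit X j - Tit X j, u ∈ Tit X (5 * I) := by
      intro u hu
      obtain ⟨a, ha, c, hc, rfl⟩ := Finset.mem_sub.1 hu
      exact Tit_mono X (by omega) (sub_mem_Tit ha hc)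
    exact ⟨u, hm u hu, s, hm s hs, h1, h2⟩
  · exfalso
    push Not at hcl
    obtain ⟨u, hu, s, hs, hsw, hus, e, he, hgap⟩ := hcl
    obtain ⟨z0, z1⟩ := zero_one_mem_Tit X j
    set t := (u / s + e) / 2 with ht
    have htne : t ≠ 0 := by
      intro h0
      have := hgap 0 (by simpa using Finset.sub_mem_sub z0 z0) 1
        (by simpa using Finset.sub_mem_sub z1 z0) hbw1
      rw [h0] at this
      rw [zero_div, sub_zero, abs_zero] at this
      linarith
    have hlow := gap_lower hρ0 hbw0 hgap htne
    rw [hρρ] at hlow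
    have hex : ∃ v, ((b : ℝ) ^ v)⁻¹ ≤ s := ⟨w, hsw⟩
    classical
    set v := Nat.find hex with hvdef
    have hv1 : ((b : ℝ) ^ v)⁻¹ ≤ s := Nat.find_spec hex
    have hvw : v ≤ w := Nat.find_min' hex hsw
    have hv2 : s ≤ b * ((b : ℝ) ^ v)⁻¹ := by
      rcases Nat.eq_zero_or_pos v with h | h
      · rw [h, pow_zero, inv_one, mul_one]
        obtain ⟨a, ha, c, hc, rfl⟩ := Finset.mem_sub.1 hs
        have h1 := abs_le.1 (Tit_bd hX j a ha)
        have h2 := abs_le.1 (Tit_bd hX j c hc)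
        have := Bd_mono (show j ≤ 5 * I by omega)
        linarith
      · have h1 := Nat.find_min hex (show v - 1 < v by omega)
        push Not at h1
        have h2 : (b : ℝ) * ((b : ℝ) ^ v)⁻¹ = ((b : ℝ) ^ (v - 1))⁻¹ := by
          obtain ⟨v', hv'⟩ : ∃ v', v = v' + 1 := ⟨v - 1, by omega⟩
          rw [hv', Nat.add_sub_cancel, pow_succ]; field_simp
        rw [h2]; exact h1.le
    have hby1 : ((b : ℝ) ^ y)⁻¹ ≤ 1 := inv_le_one_of_one_le₀ (one_le_pow₀ hb1.le)
    have hup := gap_upper hX (r := ((b : ℝ) ^ y)⁻¹) (by positivity) hby1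
      (b := b) (v := v) (by have := Bd_mono (show j ≤ 5 * I by omega); linarith) hu hs he hv1 hv2 hus ht
    have hvy : ((b : ℝ) ^ v)⁻¹ * ((b : ℝ) ^ y)⁻¹ = ((b : ℝ) ^ (v + y))⁻¹ := by
      rw [← mul_inv, ← pow_add]
    rw [hvy] at hup
    have hpos : ∀ j n, 0 < cov ((b : ℝ) ^ n)⁻¹ (Tit X j) := fun j n => by linarith [hc1 j n]
    have hall : cov ((b : ℝ) ^ w)⁻¹ (Tit X j) * cov ((b : ℝ) ^ y)⁻¹ (Tit X j) * cov ((b : ℝ) ^ v)⁻¹ (Tit X j)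
        ≤ (b : ℝ) ^ 3 * cov ((b : ℝ) ^ (v + y))⁻¹ (Tit X (j + 3)) := by
      have h1 := mul_le_mul_of_nonneg_right hlow (hpos j v).le
      have h2 : 108 * (b : ℝ) ^ 2 * cov ((b : ℝ) ^ (v + y))⁻¹ (Tit X (j + 3))
          ≤ b * (b : ℝ) ^ 2 * cov ((b : ℝ) ^ (v + y))⁻¹ (Tit X (j + 3)) := by
        have := (hpos (j + 3) (v + y)).le
        gcongr; linarith
      nlinarith
    have hlog := Real.logb_le_logb_of_le hb1
      (mul_pos (mul_pos (hpos j w) (hpos j y)) (hpos j v)) hall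
    rw [Real.logb_mul (mul_pos (hpos j w) (hpos j y)).ne' (hpos j v).ne',
      Real.logb_mul (hpos j w).ne' (hpos j y).ne',
      Real.logb_mul (by positivity) (hpos _ _).ne', Real.logb_pow, Real.logb_self_eq_one hb1] at hlog
    have h5 := hstage' (v + y) (by omega)
    have h6 := hv v hvw
    simp only [hF] at h5 h6
    push_cast at hlog
    linarith


theorem rep_one (r : ℝ) (Y : Finset ℝ) :
    ∃ P ⊆ Y, cov r Y = (P.card : ℝ) ∧ ∀ Z ⊆ P, cov r Z = (Z.card : ℝ) := by
  have hg : ∀ k : ℤ, ∃ y : ℝ, k ∈ flo r Y → y ∈ Y ∧ ⌊y / r⌋ = k := by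
    intro k
    by_cases h : k ∈ flo r Y
    · obtain ⟨y, hy, h⟩ := Finset.mem_image.1 h
      exact ⟨y, fun _ => ⟨hy, h⟩⟩
    · exact ⟨0, fun h' => absurd h' h⟩
  choose g hg using hg
  have hinj : Set.InjOn g (flo r Y) := by
    intro a ha b hb hab
    rw [← (hg a ha).2, ← (hg b hb).2, hab]
  refine ⟨(flo r Y).image g, ?_, ?_, ?_⟩
  · intro y hy
    obtain ⟨k, hk, rfl⟩ := Finset.mem_image.1 hy
    exact (hg k hk).1
  · rw [Finset.card_image_of_injOn hinj, cov_eq]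
  · intro Z hZ
    unfold cov
    rw [Finset.card_image_of_injOn]
    intro a ha b hb hab
    obtain ⟨k, hk, rfl⟩ := Finset.mem_image.1 (hZ ha)
    obtain ⟨l, hl, rfl⟩ := Finset.mem_image.1 (hZ hb)
    simp only at hab
    rw [(hg k hk).2, (hg l hl).2] at hab
    rw [hab]

theorem cs_fiber {α : Type*} (Ω : Finset α) (φ : α → ℤ) :
    (Ω.card : ℝ) ^ 2 ≤ ((Ω.image φ).card : ℝ) *
      ∑ p ∈ Ω, ((Ω.filter (fun p' => φ p' = φ p)).card : ℝ) := by
  have h1 : (Ω.card : ℝ) = ∑ k ∈ Ω.image φ, ((Ω.filter (fun p => φ p = k)).card : ℝ) := by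
    exact_mod_cast Finset.card_eq_sum_card_image φ Ω
  have h2 : ∑ p ∈ Ω, ((Ω.filter (fun p' => φ p' = φ p)).card : ℝ)
      = ∑ k ∈ Ω.image φ, ((Ω.filter (fun p => φ p = k)).card : ℝ) ^ 2 := by
    rw [← Finset.sum_fiberwise_of_maps_to (g := φ) (t := Ω.image φ)
      (fun p hp => Finset.mem_image_of_mem _ hp)]
    refine Finset.sum_congr rfl fun k _ => ?_
    have : ∀ p ∈ Ω.filter (fun p => φ p = k), ((Ω.filter (fun p' => φ p' = φ p)).card : ℝ)
        = ((Ω.filter (fun p => φ p = k)).card : ℝ) := by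
      intro p hp
      rw [(Finset.mem_filter.1 hp).2]
    rw [Finset.sum_congr rfl this, Finset.sum_const, nsmul_eq_mul, sq]
  rw [h2, h1]
  exact sq_sum_le_card_mul_sum_sq

theorem count_ap {M : ℕ} (hM : 0 < M) {e d r L : ℝ} (hd : 0 < |d|) (hL : 2 * r * M ≤ L * |d|) (hL0 : 0 ≤ L) :
    (((Finset.range M).filter (fun j : ℕ => |e + (j : ℝ) / M * d| < r)).card : ℝ) ≤ L + 1 := by
  set S := (Finset.range M).filter (fun j : ℕ => |e + (j : ℝ) / M * d| < r) with hS
  have hMr : (0 : ℝ) < M := by exact_mod_cast hM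
  rcases S.eq_empty_or_nonempty with h | h
  · rw [h]; simp; linarith
  · set j0 := S.min' h
    have hj0 : j0 ∈ S := S.min'_mem h
    have hsub : S ⊆ Finset.Icc j0 (j0 + ⌊L⌋₊) := by
      intro j hj
      have hle : j0 ≤ j := S.min'_le j hj
      rw [Finset.mem_Icc]
      refine ⟨hle, ?_⟩
      have h1 := (Finset.mem_filter.1 hj).2
      have h2 := (Finset.mem_filter.1 hj0).2
      have h3 : |((j : ℝ) - j0) / M * d| < 2 * r := by
        have e1 : ((j : ℝ) - j0) / M * d = (e + (j : ℝ) / M * d) - (e + (j0 : ℝ) / M * d) := by ring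
        rw [e1]
        have := abs_sub (e + (j : ℝ) / M * d) (e + (j0 : ℝ) / M * d)
        linarith
      have hle' : (j0 : ℝ) ≤ j := by exact_mod_cast hle
      rw [abs_mul, abs_of_nonneg (div_nonneg (by linarith) hMr.le), div_mul_eq_mul_div,
        div_lt_iff₀ hMr] at h3
      have h4 : ((j : ℝ) - j0) * |d| < L * |d| := by linarith
      have h5 : (j : ℝ) - j0 < L := lt_of_mul_lt_mul_right h4 hd.le
      have h6 : j - j0 ≤ ⌊L⌋₊ := Nat.le_floor (by rw [Nat.cast_sub hle]; linarith)
      omega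
    have h1 := Finset.card_le_card hsub
    rw [Nat.card_Icc] at h1
    have h2 : (S.card : ℝ) ≤ ⌊L⌋₊ + 1 := by
      have : S.card ≤ ⌊L⌋₊ + 1 := by omega
      exact_mod_cast this
    have := Nat.floor_le hL0
    linarith

theorem near_count {r q K1 : ℝ} {A P : Finset ℝ} {m : ℕ} (hr : 0 < r) (hq : 0 < q) (hPA : P ⊆ A)
    (hrep : ∀ Z ⊆ P, cov r Z = (Z.card : ℝ))
    (hK : cov r (A + A) ≤ K1 * cov r A) {l : ℝ} (hm : 1 ≤ m) (hl : 2 * l + r ≤ ((m : ℝ) - 1) * q) (x : ℝ) :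
    cov q A * ((P.filter (fun p => |x - p| ≤ l)).card : ℝ) ≤ 3 * m * (K1 * cov r A) := by
  have h1 := sep_int (l := 2 * l) hr hq A (P.filter (fun p => |x - p| ≤ l)) m hm (by
    intro z hz z' hz'
    have h1 := (Finset.mem_filter.1 hz).2
    have h2 := (Finset.mem_filter.1 hz').2
    have h3 : z - z' = (x - z') - (x - z) := by ring
    rw [h3]
    have := abs_sub (x - z') (x - z)
    linarith) hl
  rw [hrep _ (Finset.filter_subset _ _)] at h1
  refine h1.trans ?_
  gcongr
  refine le_trans (cov_mono ?_) hK
  exact Finset.add_subset_add_left ((Finset.filter_subset _ _).trans hPA)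

theorem close_count {r : ℝ} {P : Finset ℝ} (hr : 0 < r)
    (hrep : ∀ Z ⊆ P, cov r Z = (Z.card : ℝ)) (c : ℝ) :
    ((P.filter (fun p => |p - c| < r)).card : ℝ) ≤ 5 := by
  rw [← hrep _ (Finset.filter_subset _ _)]
  have h1 := cov_le (c := 0) (e := r) hr hr hr.le (Y := P.filter (fun p => |p - c| < r)) (Z := {c})
    (fun y hy => ⟨c, by simp, by simpa using (Finset.mem_filter.1 hy).2.le⟩)
  have h2 : cov r {c} = 1 := by simp [cov]
  rw [h2] at h1
  refine h1.trans (le_of_eq ?_)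
  field_simp; norm_num

theorem pcount {PA PX : Finset ℝ} {M : ℕ} (hM : 0 < M) {r R q a x P P1 L : ℝ} (hq : 0 < q)
    (hrR : r ≤ R) (hL0 : 0 ≤ L)
    (hclose : ∀ c, ((PA.filter (fun p => |p - c| < r)).card : ℝ) ≤ 5)
    (hnear : ((PX.filter (fun p => |x - p| ≤ q)).card : ℝ) ≤ P)
    (hP1 : ((PA.filter (fun p => |a - p| ≤ 2 * R)).card : ℝ) ≤ P1)
    (hdiam : ∀ x' ∈ PX, |x - x'| ≤ R) (hL : 2 * r * M ≤ L * q) :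
    ∑ j ∈ Finset.range M, (((PA ×ˢ PX).filter
      (fun p => |a - p.1 + (j : ℝ) / M * (x - p.2)| < r)).card : ℝ)
      ≤ 5 * M * P + PX.card * P1 * (L + 1) := by
  have hMr : (0 : ℝ) < M := by exact_mod_cast hM
  have e1 : ∀ j : ℕ, (((PA ×ˢ PX).filter
      (fun p => |a - p.1 + (j : ℝ) / M * (x - p.2)| < r)).card : ℝ)
      = ∑ x' ∈ PX, ∑ a' ∈ PA, if |a - a' + (j : ℝ) / M * (x - x')| < r then (1 : ℝ) else 0 := by
    intro j
    rw [Finset.card_filter]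
    push_cast
    rw [Finset.sum_product_right]
  simp only [e1]
  have e2 : ∀ j : ℕ, ∑ x' ∈ PX, ∑ a' ∈ PA, (if |a - a' + (j : ℝ) / M * (x - x')| < r then (1 : ℝ) else 0)
      = (∑ x' ∈ PX.filter (fun p => |x - p| ≤ q), ∑ a' ∈ PA,
          if |a - a' + (j : ℝ) / M * (x - x')| < r then (1 : ℝ) else 0)
        + ∑ x' ∈ PX.filter (fun p => ¬ |x - p| ≤ q), ∑ a' ∈ PA,
          if |a - a' + (j : ℝ) / M * (x - x')| < r then (1 : ℝ) else 0 := by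
    intro j
    rw [Finset.sum_filter_add_sum_filter_not]
  simp only [e2]
  rw [Finset.sum_add_distrib]
  have hA5 : ∀ (j : ℕ) (x' : ℝ), (∑ a' ∈ PA,
      if |a - a' + (j : ℝ) / M * (x - x')| < r then (1 : ℝ) else 0) ≤ 5 := by
    intro j x'
    refine le_trans (le_of_eq ?_) (hclose (a + (j : ℝ) / M * (x - x')))
    rw [Finset.card_filter]
    push_cast
    refine Finset.sum_congr rfl fun a' _ => ?_
    have : |a - a' + (j : ℝ) / M * (x - x')| = |a' - (a + (j : ℝ) / M * (x - x'))| := by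
      rw [abs_sub_comm]; congr 1; ring
    rw [this]
  have p1 : ∑ j ∈ Finset.range M, (∑ x' ∈ PX.filter (fun p => |x - p| ≤ q), ∑ a' ∈ PA,
      if |a - a' + (j : ℝ) / M * (x - x')| < r then (1 : ℝ) else 0) ≤ 5 * M * P := by
    calc _ ≤ ∑ j ∈ Finset.range M, (∑ x' ∈ PX.filter (fun p => |x - p| ≤ q), (5 : ℝ)) :=
          Finset.sum_le_sum fun j _ => Finset.sum_le_sum fun x' _ => hA5 j x'
      _ = 5 * M * ((PX.filter (fun p => |x - p| ≤ q)).card : ℝ) := by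
          simp only [Finset.sum_const, nsmul_eq_mul, Finset.card_range]; ring
      _ ≤ _ := by gcongr
  have p2 : ∑ j ∈ Finset.range M, (∑ x' ∈ PX.filter (fun p => ¬ |x - p| ≤ q), ∑ a' ∈ PA,
      if |a - a' + (j : ℝ) / M * (x - x')| < r then (1 : ℝ) else 0) ≤ PX.card * P1 * (L + 1) := by
    have hP10 : 0 ≤ P1 := le_trans (Nat.cast_nonneg _) hP1
    rw [Finset.sum_comm]
    have inner : ∀ x' ∈ PX.filter (fun p => ¬ |x - p| ≤ q), (∑ j ∈ Finset.range M, ∑ a' ∈ PA,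
        if |a - a' + (j : ℝ) / M * (x - x')| < r then (1 : ℝ) else 0) ≤ P1 * (L + 1) := by
      intro x' hx'
      rw [Finset.mem_filter] at hx'
      have hd := hdiam x' hx'.1
      have hfar : q < |x - x'| := not_le.1 hx'.2
      rw [Finset.sum_comm]
      have h1 : ∀ a' ∈ PA, (∑ j ∈ Finset.range M,
          if |a - a' + (j : ℝ) / M * (x - x')| < r then (1 : ℝ) else 0)
          ≤ if |a - a'| ≤ 2 * R then L + 1 else 0 := by
        intro a' _
        split_ifs with h
        · have := count_ap hM (e := a - a') (d := x - x') (r := r) (L := L) (by linarith)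
            (hL.trans (by gcongr)) hL0
          refine le_trans (le_of_eq ?_) this
          rw [Finset.card_filter]; push_cast; rfl
        · refine le_of_eq (Finset.sum_eq_zero fun j hj => if_neg ?_)
          intro hc
          apply h
          have hj' : (j : ℝ) / M ≤ 1 := by
            rw [div_le_one hMr]; exact_mod_cast (Finset.mem_range.1 hj).le
          have hj0 : 0 ≤ (j : ℝ) / M := by positivity
          have h2 : |(j : ℝ) / M * (x - x')| ≤ R := by
            rw [abs_mul, abs_of_nonneg hj0]
            calc _ ≤ 1 * |x - x'| := by gcongr
              _ ≤ R := by linarith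
          have h3 : a - a' = (a - a' + (j : ℝ) / M * (x - x')) - (j : ℝ) / M * (x - x') := by ring
          rw [h3]
          have := abs_sub (a - a' + (j : ℝ) / M * (x - x')) ((j : ℝ) / M * (x - x'))
          linarith
      refine (Finset.sum_le_sum h1).trans ?_
      rw [← Finset.sum_filter, Finset.sum_const, nsmul_eq_mul]
      gcongr
    refine (Finset.sum_le_sum inner).trans ?_
    rw [Finset.sum_const, nsmul_eq_mul, mul_assoc]
    gcongr
    exact Finset.filter_subset _ _
  linarith


/-- final algebra for the energy bound -/
theorem energy_alg {M X Q N NR Nq K1 B P P1 : ℝ} (hM : 0 < M) (hX : 0 < X) (hQ : 0 ≤ Q)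
    (hN : 1 ≤ N) (hNR : 1 ≤ NR) (hNq : 1 ≤ Nq) (hK1 : 0 ≤ K1) (hB : 1 ≤ B)
    (hP : P = 12 * (K1 * N) / Nq) (hP1 : P1 = 18 * (K1 * N) / NR) (hX1 : N ≤ NR * X)
    (hs : M * (N * X) ^ 2 ≤ 11 * Q * N * ((N * X) * (5 * M * P + X * P1 * (2 * B + 1)))) :
    M ≤ 11 * Q * (60 * M * K1 * (NR / Nq) + 54 * K1 * (N / NR) * B) := by
  have hNX : 0 < N * X * N := by positivity
  have h4 : M * X ≤ 11 * Q * (5 * M * P + X * P1 * (2 * B + 1)) := by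
    have : M * X * (N * X * N) ≤ 11 * Q * (5 * M * P + X * P1 * (2 * B + 1)) * (N * X * N) := by
      linarith [hs, show M * X * (N * X * N) = M * (N * X) ^ 2 by ring,
        show 11 * Q * (5 * M * P + X * P1 * (2 * B + 1)) * (N * X * N)
          = 11 * Q * N * ((N * X) * (5 * M * P + X * P1 * (2 * B + 1))) by ring]
    exact le_of_mul_le_mul_right this hNX
  have hPle : P ≤ 12 * K1 * (NR / Nq) * X := by
    rw [hP, div_le_iff₀ (by linarith)]
    have e : 12 * K1 * (NR / Nq) * X * Nq = 12 * (K1 * (NR * X)) := by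
      have : NR / Nq * Nq = NR := div_mul_cancel₀ _ (by linarith)
      calc _ = 12 * K1 * (NR / Nq * Nq) * X := by ring
        _ = _ := by rw [this]; ring
    rw [e]
    have := mul_le_mul_of_nonneg_left hX1 hK1
    linarith
  have hP1e : P1 = 18 * K1 * (N / NR) := by rw [hP1]; ring
  have hP10 : 0 ≤ P1 := by rw [hP1]; positivity
  have h6 : 5 * M * P + X * P1 * (2 * B + 1)
      ≤ 5 * M * (12 * K1 * (NR / Nq) * X) + X * P1 * (3 * B) := by
    have a1 := mul_le_mul_of_nonneg_left hPle (show 0 ≤ 5 * M by positivity)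
    have a2 := mul_le_mul_of_nonneg_left (show 2 * B + 1 ≤ 3 * B by linarith)
      (show 0 ≤ X * P1 by positivity)
    linarith
  have h7 := mul_le_mul_of_nonneg_left h6 (show 0 ≤ 11 * Q by positivity)
  have h5 : M * X ≤ 11 * Q * (60 * M * K1 * (NR / Nq) + 54 * K1 * (N / NR) * B) * X := by
    refine (h4.trans h7).trans (le_of_eq ?_)
    rw [hP1e]; ring
  exact le_of_mul_le_mul_right h5 hX

set_option maxHeartbeats 1000000 in
theorem energy {A : Finset ℝ} (hA : A.Nonempty) {R Q K1 : ℝ} {b z v : ℕ} (hb : 1 ≤ b)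
    (hv : v ≤ z) (hR : 0 < R)
    (hK : cov (R * ((b : ℝ) ^ z)⁻¹) (A + A) ≤ K1 * cov (R * ((b : ℝ) ^ z)⁻¹) A)
    (hM : ∀ t : ℝ, 0 ≤ t → t ≤ 1 → ∃ t', |t - t'| ≤ 4 * ((b : ℝ) ^ z)⁻¹ ∧
      cov (R * ((b : ℝ) ^ z)⁻¹) (A + t' • A) ≤ Q * cov (R * ((b : ℝ) ^ z)⁻¹) A) :
    (b : ℝ) ^ z ≤ 11 * Q * (60 * (b : ℝ) ^ z * K1 * (cov R A / cov (R * ((b : ℝ) ^ v)⁻¹) A)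
      + 54 * K1 * (cov (R * ((b : ℝ) ^ z)⁻¹) A / cov R A) * (b : ℝ) ^ v) := by
  have hb1 : (1 : ℝ) ≤ b := by exact_mod_cast hb
  have hb0 : (0 : ℝ) < b := by linarith
  have hbz : (1 : ℝ) ≤ (b : ℝ) ^ z := one_le_pow₀ hb1
  have hbv : (1 : ℝ) ≤ (b : ℝ) ^ v := one_le_pow₀ hb1
  have hbvz : (b : ℝ) ^ v ≤ (b : ℝ) ^ z := pow_le_pow_right₀ hb1 hv
  set r := R * ((b : ℝ) ^ z)⁻¹ with hr
  set q := R * ((b : ℝ) ^ v)⁻¹ with hq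
  have hr0 : 0 < r := by positivity
  have hq0 : 0 < q := by positivity
  have hrq : r ≤ q := by rw [hr, hq]; gcongr
  have hqR : q ≤ R := by
    rw [hq]; exact mul_le_of_le_one_right hR.le (inv_le_one_of_one_le₀ hbv)
  have hN : 1 ≤ cov r A := cov_pos hA
  have hNR : 1 ≤ cov R A := cov_pos hA
  have hNq : 1 ≤ cov q A := cov_pos hA
  have hK0 : 0 ≤ K1 := by
    by_contra h
    push Not at h
    have := cov_nonneg r (A + A)
    nlinarith
  have hQ0 : 0 ≤ Q := by
    obtain ⟨t', -, ht'⟩ := hM 0 le_rfl zero_le_one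
    by_contra h
    push Not at h
    have := cov_nonneg r (A + t' • A)
    nlinarith
  obtain ⟨A1, hA1, hA1ne, hA1d, hA1c⟩ := piece_exists r R hR A hA
  obtain ⟨PA, hPA, hPAc, hPAr⟩ := rep_one r A
  obtain ⟨PX, hPX, hPXc, hPXr⟩ := rep_one r A1
  obtain ⟨x0, hx0⟩ := hA1ne
  set M := b ^ z with hMdef
  have hMr : (M : ℝ) = (b : ℝ) ^ z := by rw [hMdef]; push_cast; rfl
  have hM0 : 0 < M := Nat.pow_pos hb
  have hMr0 : (0 : ℝ) < M := by exact_mod_cast hM0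
  set Ω := PA ×ˢ PX with hΩ
  have hΩc : (Ω.card : ℝ) = cov r A * PX.card := by
    rw [hΩ, Finset.card_product, hPAc]; push_cast; rfl
  set P := 12 * (K1 * cov r A) / cov q A with hP
  set P1 := 18 * (K1 * cov r A) / cov R A with hP1
  -- image bound
  have himg : ∀ j ∈ Finset.range M,
      ((Ω.image (fun p : ℝ × ℝ => ⌊(p.1 + (j : ℝ) / M * p.2) / r⌋)).card : ℝ) ≤ 11 * Q * cov r A := by
    intro j hj
    have hj1 : (j : ℝ) / M ≤ 1 := by
      rw [div_le_one hMr0]; exact_mod_cast (Finset.mem_range.1 hj).le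
    have hj0 : 0 ≤ (j : ℝ) / M := by positivity
    obtain ⟨t', ht', hct'⟩ := hM _ hj0 hj1
    have h1 : ((Ω.image (fun p : ℝ × ℝ => ⌊(p.1 + (j : ℝ) / M * p.2) / r⌋)).card : ℝ)
        ≤ cov r (PA + ((j : ℝ) / M) • PX) := by
      unfold cov
      have : Ω.image (fun p : ℝ × ℝ => ⌊(p.1 + (j : ℝ) / M * p.2) / r⌋)
          ⊆ (PA + ((j : ℝ) / M) • PX).image (fun y => ⌊y / r⌋) := by
        intro k hk
        obtain ⟨p, hp, rfl⟩ := Finset.mem_image.1 hk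
        rw [hΩ, Finset.mem_product] at hp
        exact Finset.mem_image_of_mem (fun y => ⌊y / r⌋)
          (Finset.add_mem_add hp.1 (Finset.smul_mem_smul_finset hp.2))
      exact_mod_cast Finset.card_le_card this
    have h2 := cov_le (c := ((j : ℝ) / M - t') * x0) (e := 4 * r) hr0 hr0 (by positivity)
      (Y := PA + ((j : ℝ) / M) • PX) (Z := A + t' • A) (by
        intro y hy
        obtain ⟨a, ha, u, hu, rfl⟩ := Finset.mem_add.1 hy
        obtain ⟨x, hx, rfl⟩ := Finset.mem_smul_finset.1 hu
        refine ⟨a + t' • x, Finset.add_mem_add (hPA ha)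
          (Finset.smul_mem_smul_finset (hA1 (hPX hx))), ?_⟩
        simp only [smul_eq_mul]
        have e : a + (j : ℝ) / M * x - (a + t' * x + ((j : ℝ) / M - t') * x0)
            = ((j : ℝ) / M - t') * (x - x0) := by ring
        rw [e, abs_mul]
        calc _ ≤ (4 * ((b : ℝ) ^ z)⁻¹) * R := by
              gcongr
              exact hA1d x (hPX hx) x0 hx0
          _ = 4 * r := by rw [hr]; ring)
    have e3 : (r + 2 * (4 * r)) / r + 2 = 11 := by field_simp; norm_num
    rw [e3] at h2
    nlinarith
  -- count bound
  have hcount : ∀ p ∈ Ω, ∑ j ∈ Finset.range M, ((Ω.filter (fun p' =>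
      ⌊(p'.1 + (j : ℝ) / M * p'.2) / r⌋ = ⌊(p.1 + (j : ℝ) / M * p.2) / r⌋)).card : ℝ)
      ≤ 5 * M * P + PX.card * P1 * (2 * (b : ℝ) ^ v + 1) := by
    intro p hp
    rw [hΩ, Finset.mem_product] at hp
    have h1 := pcount (PA := PA) (PX := PX) hM0 (r := r) (R := R) (q := q) (a := p.1) (x := p.2)
      (P := P) (P1 := P1) (L := 2 * (b : ℝ) ^ v) hq0 (hrq.trans hqR) (by positivity)
      (close_count hr0 hPAr)
      (by
        rw [hP, le_div_iff₀ (by linarith), mul_comm]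
        have := near_count (m := 4) hr0 hq0 (hPX.trans hA1) hPXr hK (l := q) (by norm_num)
          (by push_cast; linarith) p.2
        refine this.trans (le_of_eq ?_)
        push_cast; ring)
      (by
        rw [hP1, le_div_iff₀ (by linarith), mul_comm]
        have := near_count (m := 6) hr0 hR hPA hPAr hK (l := 2 * R) (by norm_num)
          (by push_cast; linarith) p.1
        refine this.trans (le_of_eq ?_)
        push_cast; ring)
      (fun x' hx' => hA1d _ (hPX hp.2) _ (hPX hx'))
      (by
        rw [hMr, hr, hq]
        apply le_of_eq; field_simp)
    refine le_trans (Finset.sum_le_sum fun j _ => ?_) h1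
    have : Ω.filter (fun p' =>
        ⌊(p'.1 + (j : ℝ) / M * p'.2) / r⌋ = ⌊(p.1 + (j : ℝ) / M * p.2) / r⌋)
        ⊆ (PA ×ˢ PX).filter (fun p' => |p.1 - p'.1 + (j : ℝ) / M * (p.2 - p'.2)| < r) := by
      intro p' hp'
      rw [Finset.mem_filter] at hp' ⊢
      refine ⟨hp'.1, ?_⟩
      have h2 := Int.abs_sub_lt_one_of_floor_eq_floor hp'.2
      rw [← sub_div, abs_div, abs_of_pos hr0, div_lt_one hr0, abs_sub_comm] at h2
      have e : p.1 - p'.1 + (j : ℝ) / M * (p.2 - p'.2)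
          = (p.1 + (j : ℝ) / M * p.2) - (p'.1 + (j : ℝ) / M * p'.2) := by ring
      rw [e]; exact h2
    exact_mod_cast Finset.card_le_card this
  have hsum : (M : ℝ) * (Ω.card : ℝ) ^ 2 ≤ 11 * Q * cov r A *
      (Ω.card * (5 * M * P + PX.card * P1 * (2 * (b : ℝ) ^ v + 1))) := by
    calc (M : ℝ) * (Ω.card : ℝ) ^ 2 = ∑ j ∈ Finset.range M, (Ω.card : ℝ) ^ 2 := by
          rw [Finset.sum_const, nsmul_eq_mul, Finset.card_range]
      _ ≤ ∑ j ∈ Finset.range M, 11 * Q * cov r A * ∑ p ∈ Ω, ((Ω.filter (fun p' =>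
          ⌊(p'.1 + (j : ℝ) / M * p'.2) / r⌋ = ⌊(p.1 + (j : ℝ) / M * p.2) / r⌋)).card : ℝ) := by
          refine Finset.sum_le_sum fun j hj => ?_
          refine (cs_fiber Ω (fun p : ℝ × ℝ => ⌊(p.1 + (j : ℝ) / M * p.2) / r⌋)).trans ?_
          exact mul_le_mul_of_nonneg_right (himg j hj) (Finset.sum_nonneg fun _ _ => Nat.cast_nonneg _)
      _ = 11 * Q * cov r A * ∑ p ∈ Ω, ∑ j ∈ Finset.range M, ((Ω.filter (fun p' =>
          ⌊(p'.1 + (j : ℝ) / M * p'.2) / r⌋ = ⌊(p.1 + (j : ℝ) / M * p.2) / r⌋)).card : ℝ) := by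
          rw [← Finset.mul_sum, Finset.sum_comm]
      _ ≤ 11 * Q * cov r A * ∑ p ∈ Ω, (5 * M * P + PX.card * P1 * (2 * (b : ℝ) ^ v + 1)) := by
          gcongr with p hp
          exact hcount p hp
      _ = _ := by rw [Finset.sum_const, nsmul_eq_mul]
  -- final algebra
  have hX1 : cov r A ≤ cov R A * PX.card := by rw [← hPXc]; exact hA1c
  have hXpos : (0 : ℝ) < PX.card := by nlinarith
  rw [hΩc] at hsum
  rw [← hMr]
  exact energy_alg hMr0 hXpos hQ0 hN hNR hNq hK0 hbv hP hP1 hX1 hsum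

/-- one step of the growth chain -/
theorem chain_step {A : Finset ℝ} (hA : A.Nonempty) {R Q Δ t ρ : ℝ} (hR : 0 < R) (hΔ : 0 < Δ)
    (hΔ1 : Δ ≤ 1) (ht : Δ ≤ t) (ht2 : t ≤ 9 * Δ) (hρ : 0 < ρ) (hρR : ρ ≤ R)
    (hQ : cov (ρ * Δ) (A + t • A) ≤ Q * cov (ρ * Δ) A) :
    cov (R * Δ) A * cov ρ A ≤ 99 * Q * cov R A * cov (ρ * Δ) A := by
  have ht0 : 0 < t := by linarith
  obtain ⟨A2, hA2, hne, hd, hc⟩ := piece_exists ρ R hR A hA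
  have h1 := sep_int (r := ρ * Δ) (q := R * Δ) (l := 9 * (R * Δ)) (by positivity) (by positivity)
    A (t • A2) 11 (by norm_num) (by
      intro z hz z' hz'
      obtain ⟨a, ha, rfl⟩ := Finset.mem_smul_finset.1 hz
      obtain ⟨a', ha', rfl⟩ := Finset.mem_smul_finset.1 hz'
      rw [smul_eq_mul, smul_eq_mul, ← mul_sub, abs_mul, abs_of_pos ht0]
      calc t * |a - a'| ≤ (9 * Δ) * R := by gcongr; exact hd a ha a' ha'
        _ = _ := by ring) (by
      push_cast
      have : ρ * Δ ≤ R * Δ := by gcongr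
      linarith)
  have h2 : cov ρ A2 ≤ 3 * cov (ρ * Δ) (t • A2) := by
    have e : ρ * Δ = t * (ρ * Δ / t) := by field_simp
    rw [e, cov_smul_pos ht0]
    apply cov_coarse (by positivity)
    rw [div_le_iff₀ ht0]; gcongr
  have h3 : cov (ρ * Δ) (A + t • A2) ≤ cov (ρ * Δ) (A + t • A) :=
    cov_mono (Finset.add_subset_add_left (Finset.smul_finset_subset_smul_finset hA2))
  push_cast at h1
  have n1 := cov_nonneg (R * Δ) A
  have n2 := cov_nonneg R A
  calc cov (R * Δ) A * cov ρ A ≤ cov (R * Δ) A * (cov R A * (3 * cov (ρ * Δ) (t • A2))) := by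
        exact mul_le_mul_of_nonneg_left (hc.trans (mul_le_mul_of_nonneg_left h2 n2)) n1
    _ = 3 * cov R A * (cov (R * Δ) A * cov (ρ * Δ) (t • A2)) := by ring
    _ ≤ 3 * cov R A * (33 * (Q * cov (ρ * Δ) A)) := by
        exact mul_le_mul_of_nonneg_left (by linarith) (by positivity)
    _ = _ := by ring

theorem chain {A : Finset ℝ} (hA : A.Nonempty) {R Q Δ t r0 : ℝ} (hR : 0 < R) (hΔ : 0 < Δ)
    (hΔ1 : Δ ≤ 1) (ht : Δ ≤ t) (ht2 : t ≤ 9 * Δ) (hQ0 : 1 ≤ Q)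
    (hQ : ∀ r, r0 ≤ r → cov r (A + t • A) ≤ Q * cov r A) (m : ℕ) (hm : r0 ≤ R * Δ ^ m) :
    (cov (R * Δ) A / cov R A) ^ m ≤ (99 * Q) ^ m * cov (R * Δ ^ m) A := by
  have hNR : 1 ≤ cov R A := cov_pos hA
  have key : ∀ i ≤ m, (cov (R * Δ) A / cov R A) ^ i * cov R A ≤ (99 * Q) ^ i * cov (R * Δ ^ i) A := by
    intro i
    induction i with
    | zero => intro _; simp
    | succ i ih =>
      intro hi
      have h1 := ih (by omega)
      have h2 := chain_step hA (ρ := R * Δ ^ i) hR hΔ hΔ1 ht ht2 (by positivity)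
        (mul_le_of_le_one_right hR.le (pow_le_one₀ hΔ.le hΔ1))
        (hQ (R * Δ ^ i * Δ) (hm.trans (by
          rw [mul_assoc, ← pow_succ]
          exact mul_le_mul_of_nonneg_left (pow_le_pow_of_le_one hΔ.le hΔ1 hi) hR.le)))
      have h3 : cov (R * Δ) A / cov R A * cov (R * Δ ^ i) A ≤ 99 * Q * cov (R * Δ ^ (i + 1)) A := by
        rw [div_mul_eq_mul_div, div_le_iff₀ (by linarith)]
        rw [mul_assoc R, ← pow_succ] at h2
        linarith
      have n1 : 0 ≤ cov (R * Δ) A / cov R A := div_nonneg (cov_nonneg _ _) (cov_nonneg _ _)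
      calc _ = cov (R * Δ) A / cov R A * ((cov (R * Δ) A / cov R A) ^ i * cov R A) := by ring
        _ ≤ cov (R * Δ) A / cov R A * ((99 * Q) ^ i * cov (R * Δ ^ i) A) := by gcongr
        _ = (99 * Q) ^ i * (cov (R * Δ) A / cov R A * cov (R * Δ ^ i) A) := by ring
        _ ≤ (99 * Q) ^ i * (99 * Q * cov (R * Δ ^ (i + 1)) A) := by gcongr
        _ = _ := by ring
  have h1 := key m le_rfl
  refine le_trans ?_ h1
  have n1 : 0 ≤ (cov (R * Δ) A / cov R A) ^ m :=
    pow_nonneg (div_nonneg (cov_nonneg _ _) (cov_nonneg _ _)) _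
  nlinarith


theorem mult_quot {A X : Finset ℝ} {δ K D B u s : ℝ} {E : ℕ} (hbase : Base A δ K X) (hD : 1 ≤ D)
    (hu : Good A (D * δ) (K ^ E) u) (hs : Good A (D * δ) (K ^ E) s) (hB : 1 ≤ B) (hsB : B⁻¹ ≤ s)
    {r : ℝ} (hr : D * δ * B ≤ r) :
    cov r (A + (u / s) • A) ≤ 3 * K ^ (2 * E + 30) * B * cov r A := by
  obtain ⟨hA, hδ, hK, -, h1, -⟩ := hbase
  have hB0 : 0 < B := by linarith
  have hs0 : 0 < s := lt_of_lt_of_le (by positivity) hsB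
  have hr0 : 0 < r := lt_of_lt_of_le (by positivity) hr
  have hK0 : 0 < K := by linarith
  have hsr : D * δ ≤ s * r := by
    calc D * δ = B⁻¹ * (D * δ * B) := by field_simp
      _ ≤ s * r := mul_le_mul hsB hr (by positivity) hs0.le
  have hsrδ : δ ≤ s * r := le_trans (by nlinarith) hsr
  have e1 : s • (A + (u / s) • A) = s • A + u • A := by
    rw [smul_add, smul_smul, mul_div_cancel₀ _ hs0.ne']
  rw [← cov_smul_pos hs0, e1]
  have a1 := hs (s * r) hsr (u • A)
  have a2 := hu (s * r) hsr A
  have a3 := h1 (s * r) hsrδ {0}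
  have e0 : A + A + {0} = A + A := by rw [Finset.singleton_zero, add_zero]
  have e0' : A + {0} = A := by rw [Finset.singleton_zero, add_zero]
  rw [e0, e0'] at a3
  have a4 : cov (s * r) A ≤ 3 * B * cov r A := by
    refine (cov_fine (by positivity) hr0 A).trans ?_
    refine mul_le_mul_of_nonneg_right ?_ (cov_nonneg _ _)
    have : r / (s * r) ≤ B := by
      rw [div_le_iff₀ (by positivity)]
      have : 1 ≤ B * s := by
        calc (1:ℝ) = B * B⁻¹ := by field_simp
          _ ≤ B * s := by gcongr
      nlinarith
    linarith
  rw [add_comm A (u • A)] at a1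
  have hKE : 0 ≤ K ^ E := by positivity
  calc cov (s * r) (s • A + u • A) ≤ K ^ E * cov (s * r) (u • A + A) := a1
    _ ≤ K ^ E * (K ^ E * cov (s * r) (A + A)) := mul_le_mul_of_nonneg_left a2 hKE
    _ ≤ K ^ E * (K ^ E * (K ^ 30 * cov (s * r) A)) := by
        exact mul_le_mul_of_nonneg_left (mul_le_mul_of_nonneg_left a3 hKE) hKE
    _ ≤ K ^ E * (K ^ E * (K ^ 30 * (3 * B * cov r A))) := by
        exact mul_le_mul_of_nonneg_left (mul_le_mul_of_nonneg_left
          (mul_le_mul_of_nonneg_left a4 (by positivity)) hKE) hKE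
    _ = _ := by ring

theorem core_alg {K b H NN σ' ε2 Q Bz Bw Bv : ℝ} {E w v z : ℕ} (hK : 100 ≤ K)
    (hbK : 10 ^ 7 * K ^ (4 * E + 90) ≤ b) (hε : (w : ℝ) + 2 ≤ ε2 * v)
    (hexp : (v : ℝ) + 2 * w + 1 + σ' * z ≤ z) (hBz : Bz = b ^ z) (hBw : Bw = b ^ w) (hBv : Bv = b ^ v)
    (hQ : Q = 3 * K ^ (2 * E + 30) * Bw) (hNN : NN ≤ (b ^ (ε2 * v))⁻¹) (hNN0 : 0 ≤ NN) (hH0 : 0 ≤ H)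
    (hH : H ≤ 99 * Q * b ^ (σ' * z))
    (h : Bz ≤ 11 * Q * (60 * Bz * K ^ 30 * NN + 54 * K ^ 30 * H * Bv)) : False := by
  have hK1 : 1 ≤ K := by linarith
  have hK90 : (1 : ℝ) ≤ K ^ (4 * E + 90) := one_le_pow₀ hK1
  have hb1 : 1 ≤ b := by linarith
  have hb0 : 0 < b := by linarith
  have hBz0 : 0 < Bz := by rw [hBz]; positivity
  have hBw0 : 0 < Bw := by rw [hBw]; positivity
  have hBv0 : 0 < Bv := by rw [hBv]; positivity
  have hQ0 : 0 < Q := by rw [hQ]; positivity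
  -- first term
  have t1 : 11 * Q * (60 * Bz * K ^ 30 * NN) ≤ Bz / 4 := by
    have hk : K ^ (2 * E + 60) ≤ K ^ (4 * E + 90) := pow_le_pow_right₀ hK1 (by omega)
    have h1 : NN * Bw ≤ b⁻¹ := by
      have : NN ≤ (b ^ ((w : ℝ) + 2))⁻¹ := hNN.trans (by
        gcongr)
      have e : (b ^ ((w : ℝ) + 2))⁻¹ * Bw = (b ^ 2)⁻¹ := by
        rw [hBw, Real.rpow_add hb0, Real.rpow_natCast]
        have : b ^ (2 : ℝ) = b ^ 2 := by exact_mod_cast Real.rpow_natCast b 2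
        rw [this]; field_simp
      have h2 : NN * Bw ≤ (b ^ 2)⁻¹ := by rw [← e]; gcongr
      refine h2.trans ?_
      gcongr; nlinarith
    have h3 : K ^ (2 * E + 60) * (NN * Bw) * 10 ^ 7 ≤ 1 := by
      calc K ^ (2 * E + 60) * (NN * Bw) * 10 ^ 7 ≤ K ^ (4 * E + 90) * b⁻¹ * 10 ^ 7 := by gcongr
        _ = (10 ^ 7 * K ^ (4 * E + 90)) * b⁻¹ := by ring
        _ ≤ b * b⁻¹ := by gcongr
        _ = 1 := by field_simp
    have e : 11 * Q * (60 * Bz * K ^ 30 * NN) = 1980 * (K ^ (2 * E + 60) * (NN * Bw)) * Bz := by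
      rw [hQ]; ring
    rw [e]
    have h4 : 1980 * (K ^ (2 * E + 60) * (NN * Bw)) ≤ 1 / 4 := by linarith
    calc _ ≤ 1 / 4 * Bz := mul_le_mul_of_nonneg_right h4 hBz0.le
      _ = _ := by ring
  have t2 : 11 * Q * (54 * K ^ 30 * H * Bv) ≤ Bz / 4 := by
    have h1 : 11 * Q * (54 * K ^ 30 * H * Bv) ≤ 11 * Q * (54 * K ^ 30 * (99 * Q * b ^ (σ' * z)) * Bv) := by
      gcongr
    refine h1.trans ?_
    have e : 11 * Q * (54 * K ^ 30 * (99 * Q * b ^ (σ' * z)) * Bv)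
        = 529254 * K ^ (4 * E + 90) * (Bw * Bw * Bv * b ^ (σ' * z)) := by
      rw [hQ]; ring
    rw [e]
    have e2 : Bw * Bw * Bv * b ^ (σ' * z) * b = b ^ ((v : ℝ) + 2 * w + 1 + σ' * z) := by
      have : (v : ℝ) + 2 * w + 1 + σ' * z = w + w + v + σ' * z + 1 := by ring
      rw [this, Real.rpow_add hb0, Real.rpow_add hb0, Real.rpow_add hb0, Real.rpow_add hb0,
        Real.rpow_one, Real.rpow_natCast, Real.rpow_natCast, hBw, hBv]
    have h2 : Bw * Bw * Bv * b ^ (σ' * z) * b ≤ Bz := by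
      rw [e2, hBz, ← Real.rpow_natCast b z]
      exact Real.rpow_le_rpow_of_exponent_le hb1 hexp
    have h3 : 0 ≤ Bw * Bw * Bv * b ^ (σ' * z) := by positivity
    have h4 := mul_le_mul_of_nonneg_right hbK h3
    linarith
  have : 11 * Q * (60 * Bz * K ^ 30 * NN + 54 * K ^ 30 * H * Bv)
    = 11 * Q * (60 * Bz * K ^ 30 * NN) + 11 * Q * (54 * K ^ 30 * H * Bv) := by ring
  linarith

theorem core {A X : Finset ℝ} {δ K D R σ' ε2 : ℝ} {E k b w y v m : ℕ} (hbase : Base A δ K X)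
    (hD : 1 ≤ D) (hG : ∀ x ∈ Tit X k, Good A (D * δ) (K ^ E) x)
    (hbK : 10 ^ 7 * K ^ (4 * E + 90) ≤ b) (hwy : w < y) (hR : 0 < R)
    (hdense : ∀ t : ℝ, 0 ≤ t → t ≤ 1 →
        ∃ u ∈ Tit X k, ∃ s ∈ Tit X k, ((b : ℝ) ^ w)⁻¹ ≤ s ∧
          |u - t * s| ≤ 4 * ((b : ℝ) ^ (y - w))⁻¹ * s)
    (hv : v ≤ y - w) (hε : (w : ℝ) + 2 ≤ ε2 * v)
    (hexp : (v : ℝ) + 2 * w + 1 + σ' * (y - w : ℕ) ≤ (y - w : ℕ))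
    (hmin : (b : ℝ) ^ (ε2 * v) * cov R A ≤ cov (R * ((b : ℝ) ^ v)⁻¹) A)
    (hm : 1 ≤ m) (hmr : D * δ * (b : ℝ) ^ w ≤ R * (((b : ℝ) ^ (y - w))⁻¹) ^ m)
    (hN : cov (R * (((b : ℝ) ^ (y - w))⁻¹) ^ m) A ≤ (b : ℝ) ^ (σ' * (y - w : ℕ) * m)) : False := by
  have hbase' := hbase
  obtain ⟨hA, hδ, hK, -, hAA, -⟩ := hbase'
  have hK1 : 1 ≤ K := by linarith
  have hK90 : (1 : ℝ) ≤ K ^ (4 * E + 90) := one_le_pow₀ hK1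
  have hK30 : (1 : ℝ) ≤ K ^ (2 * E + 30) := one_le_pow₀ hK1
  have hb5 : (5 : ℝ) ≤ b := by linarith
  have hb1 : (1 : ℝ) ≤ b := by linarith
  have hb0 : (0 : ℝ) < b := by linarith
  have hz1 : 1 ≤ y - w := by omega
  generalize y - w = z at hz1 hdense hv hexp hmr hN
  have hbw : (1 : ℝ) ≤ (b : ℝ) ^ w := one_le_pow₀ hb1
  have hbz5 : (5 : ℝ) ≤ (b : ℝ) ^ z := by
    calc (5 : ℝ) ≤ b ^ 1 := by simpa using hb5
      _ ≤ b ^ z := pow_le_pow_right₀ hb1 hz1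
  set Δ := ((b : ℝ) ^ z)⁻¹ with hΔ
  have hΔ0 : 0 < Δ := by positivity
  have hΔ5 : 5 * Δ ≤ 1 := by
    rw [hΔ, ← div_eq_mul_inv, div_le_one (by linarith)]; exact hbz5
  have hΔ1 : Δ ≤ 1 := by linarith
  set Q := 3 * K ^ (2 * E + 30) * (b : ℝ) ^ w with hQ
  have hQ1 : 1 ≤ Q := by rw [hQ]; nlinarith
  have hmul : ∀ t : ℝ, 0 ≤ t → t ≤ 1 → ∃ t', |t - t'| ≤ 4 * Δ ∧
      ∀ r, D * δ * (b : ℝ) ^ w ≤ r → cov r (A + t' • A) ≤ Q * cov r A := by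
    intro t ht0 ht1
    obtain ⟨u, hu, s, hs, hsb, hus⟩ := hdense t ht0 ht1
    have hs0 : 0 < s := lt_of_lt_of_le (by positivity) hsb
    refine ⟨u / s, ?_, fun r hr => mult_quot hbase hD (hG u hu) (hG s hs) hbw hsb hr⟩
    have e : t - u / s = -((u - t * s) / s) := by field_simp; ring
    rw [e, abs_neg, abs_div, abs_of_pos hs0, div_le_iff₀ hs0]
    exact hus
  have hRΔ : D * δ * (b : ℝ) ^ w ≤ R * Δ := hmr.trans (by
    have := pow_le_pow_of_le_one hΔ0.le hΔ1 hm
    rw [pow_one] at this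
    exact mul_le_mul_of_nonneg_left this hR.le)
  have hRδ : δ ≤ R * Δ := le_trans (by
    calc δ = 1 * δ * 1 := by ring
      _ ≤ D * δ * (b : ℝ) ^ w := by gcongr) hRΔ
  -- chain
  have hNR : 1 ≤ cov R A := cov_pos hA
  obtain ⟨t', ht', hct'⟩ := hmul (5 * Δ) (by positivity) hΔ5
  rw [abs_le] at ht'
  have hch := chain hA (t := t') hR hΔ0 hΔ1 (by linarith [ht'.2]) (by linarith [ht'.1]) hQ1 hct' m hmr
  set H := cov (R * Δ) A / cov R A with hH
  have hH0 : 0 ≤ H := div_nonneg (cov_nonneg _ _) (cov_nonneg _ _)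
  have hHle : H ≤ 99 * Q * (b : ℝ) ^ (σ' * z) := by
    have h1 : H ^ m ≤ (99 * Q * (b : ℝ) ^ (σ' * z)) ^ m := by
      rw [mul_pow, ← Real.rpow_natCast ((b : ℝ) ^ (σ' * z)) m, ← Real.rpow_mul hb0.le]
      exact hch.trans (mul_le_mul_of_nonneg_left hN (by positivity))
    exact le_of_pow_le_pow_left₀ (by omega) (by positivity) h1
  have hen := energy hA (Q := Q) (K1 := K ^ 30) (b := b) (z := z) (v := v)
    (by exact_mod_cast hb1) hv hR
    (by
      have a3 := hAA (R * Δ) hRδ {0}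
      have e0 : A + A + {0} = A + A := by rw [Finset.singleton_zero, add_zero]
      have e0' : A + {0} = A := by rw [Finset.singleton_zero, add_zero]
      rw [e0, e0'] at a3
      exact a3)
    (fun t h0 h1 => by
      obtain ⟨t', h, h'⟩ := hmul t h0 h1
      exact ⟨t', h, h' _ hRΔ⟩)
  have hNq : 1 ≤ cov (R * ((b : ℝ) ^ v)⁻¹) A := cov_pos hA
  refine core_alg (E := E) (NN := cov R A / cov (R * ((b : ℝ) ^ v)⁻¹) A) hK hbK hε hexp rfl rfl rfl
    rfl ?_ ?_ hH0 hHle hen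
  · rw [div_le_iff₀ (by linarith), inv_mul_eq_div, le_div_iff₀ (by positivity), mul_comm]
    exact hmin
  · positivity


theorem small_pow (C e : ℝ) (he : 0 < e) :
    ∃ δ0 : ℝ, 0 < δ0 ∧ δ0 ≤ 1 ∧ ∀ δ : ℝ, 0 < δ → δ < δ0 → C ≤ δ ^ (-e) := by
  set M := max C 1 with hM
  have hM1 : 1 ≤ M := le_max_right _ _
  refine ⟨M ^ (-(1 / e)), by positivity, ?_, ?_⟩
  · exact Real.rpow_le_one_of_one_le_of_nonpos hM1 (by simp; positivity)
  · intro δ h0 h1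
    have h2 : (M ^ (-(1 / e))) ^ (-e) = M := by
      rw [← Real.rpow_mul (by linarith)]
      have : -(1 / e) * -e = 1 := by field_simp
      rw [this, Real.rpow_one]
    calc C ≤ M := le_max_left _ _
      _ = (M ^ (-(1 / e))) ^ (-e) := h2.symm
      _ ≤ δ ^ (-e) := Real.rpow_le_rpow_of_nonpos h0 h1.le (by linarith)

theorem minim {A : Finset ℝ} {δ K κ C1 ε2 ξ : ℝ} {b : ℕ} (hδ : 0 < δ) (hδ1 : δ < 1) (hK : 0 < K)
    (hb : 2 ≤ b) (hbδ : (b : ℝ) ≤ δ⁻¹) (hC1 : 0 ≤ C1) (hε : 0 < ε2) (hεκ : ε2 ≤ κ) (hξ : 0 < ξ)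
    (hAc : ∀ r, δ ≤ r → r ≤ 1 → K⁻¹ * r ^ (-κ) ≤ cov r A)
    (hfar : cov (δ ^ (-C1)) A ≤ K)
    (hsm : 3 * K ^ 2 * δ ^ (-((C1 + 1) * ε2)) < δ ^ (-(ξ * (κ - ε2)))) :
    ∃ i : ℕ, δ ^ ξ ≤ δ * (b : ℝ) ^ i ∧ ∀ v ≤ i, (b : ℝ) ^ (ε2 * v) * cov (δ * (b : ℝ) ^ i) A
      ≤ cov (δ * (b : ℝ) ^ i * ((b : ℝ) ^ v)⁻¹) A := by
  have hb2 : (2 : ℝ) ≤ b := by exact_mod_cast hb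
  have hb0 : (0 : ℝ) < b := by linarith
  have hex : ∃ n : ℕ, δ ^ (-C1) ≤ δ * (b : ℝ) ^ n := by
    obtain ⟨n, hn⟩ := pow_unbounded_of_one_lt (δ ^ (-C1) / δ) (show (1 : ℝ) < b by linarith)
    refine ⟨n, ?_⟩
    rw [div_lt_iff₀ hδ] at hn
    linarith
  classical
  obtain ⟨I, hI1, hI2⟩ : ∃ I : ℕ, δ ^ (-C1) ≤ δ * (b : ℝ) ^ I ∧ δ * (b : ℝ) ^ I ≤ δ ^ (-C1) * b := by
    refine ⟨Nat.find hex, Nat.find_spec hex, ?_⟩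
    rcases Nat.eq_zero_or_pos (Nat.find hex) with h | h
    · rw [h, pow_zero, mul_one]
      have : 1 ≤ δ ^ (-C1) := Real.one_le_rpow_of_pos_of_le_one_of_nonpos hδ hδ1.le (by linarith)
      nlinarith
    · have h1 := Nat.find_min hex (Nat.sub_lt h one_pos)
      push Not at h1
      have e : (b : ℝ) ^ Nat.find hex = b ^ (Nat.find hex - 1) * b := by
        rw [← pow_succ]; congr 1; omega
      rw [e, ← mul_assoc]
      gcongr
  obtain ⟨i, hi, hmin⟩ := Finset.exists_min_image (Finset.range (I + 1))
    (fun i : ℕ => cov (δ * (b : ℝ) ^ i) A * (δ * (b : ℝ) ^ i) ^ ε2) ⟨0, by simp⟩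
  have hiI : i ≤ I := by simpa [Nat.lt_succ_iff] using hi
  set R := δ * (b : ℝ) ^ i with hR
  have hR0 : 0 < R := by positivity
  refine ⟨i, ?_, ?_⟩
  · by_contra hlt
    push Not at hlt
    have hδξ : δ ^ ξ ≤ 1 := Real.rpow_le_one hδ.le hδ1.le hξ.le
    have h1 : δ ≤ R := by
      rw [hR]; exact le_mul_of_one_le_right hδ.le (one_le_pow₀ (by linarith))
    have h2 := hAc R h1 (hlt.le.trans hδξ)
    have h3 := hmin I (by simp)
    have h4 : cov (δ * (b : ℝ) ^ I) A ≤ 3 * K :=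
      (cov_coarse (by positivity) hI1 A).trans (by linarith)
    have h5 : (δ * (b : ℝ) ^ I) ^ ε2 ≤ δ ^ (-((C1 + 1) * ε2)) := by
      have : δ * (b : ℝ) ^ I ≤ δ ^ (-(C1 + 1)) := by
        refine hI2.trans ?_
        rw [neg_add, Real.rpow_add hδ, Real.rpow_neg_one]
        gcongr
      calc (δ * (b : ℝ) ^ I) ^ ε2 ≤ (δ ^ (-(C1 + 1))) ^ ε2 := by gcongr
        _ = _ := by rw [← Real.rpow_mul hδ.le]; congr 1; ring
    have h6 : K⁻¹ * δ ^ (-(ξ * (κ - ε2))) ≤ cov R A * R ^ ε2 := by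
      have a1 : K⁻¹ * R ^ (-κ) * R ^ ε2 ≤ cov R A * R ^ ε2 := by gcongr
      refine le_trans ?_ a1
      rw [mul_assoc, ← Real.rpow_add hR0]
      have a2 : δ ^ (-(ξ * (κ - ε2))) = (δ ^ ξ) ^ (-κ + ε2) := by
        rw [← Real.rpow_mul hδ.le]; congr 1; ring
      rw [a2]
      gcongr ?_ * ?_
      exact Real.rpow_le_rpow_of_nonpos hR0 hlt.le (by linarith)
    have h7 : cov (δ * (b : ℝ) ^ I) A * (δ * (b : ℝ) ^ I) ^ ε2
        ≤ 3 * K * δ ^ (-((C1 + 1) * ε2)) := by gcongr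
    have h8 : K⁻¹ * δ ^ (-(ξ * (κ - ε2))) ≤ 3 * K * δ ^ (-((C1 + 1) * ε2)) :=
      h6.trans (h3.trans h7)
    rw [inv_mul_le_iff₀ hK] at h8
    nlinarith
  · intro v hv
    have h3 := hmin (i - v) (by simp; omega)
    have e : δ * (b : ℝ) ^ (i - v) = R * ((b : ℝ) ^ v)⁻¹ := by
      rw [hR, mul_assoc, pow_sub₀ _ hb0.ne' hv]
    simp only [e] at h3
    have e2 : (R * ((b : ℝ) ^ v)⁻¹) ^ ε2 = R ^ ε2 * ((b : ℝ) ^ (ε2 * v))⁻¹ := by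
      rw [Real.mul_rpow hR0.le (by positivity), Real.inv_rpow (by positivity),
        ← Real.rpow_natCast (b : ℝ) v, ← Real.rpow_mul hb0.le, mul_comm (v : ℝ)]
    rw [e2] at h3
    have hRε : 0 < R ^ ε2 := by positivity
    have hbε : 0 < (b : ℝ) ^ (ε2 * v) := by positivity
    have h4 : cov R A ≤ cov (R * ((b : ℝ) ^ v)⁻¹) A * ((b : ℝ) ^ (ε2 * v))⁻¹ := by
      refine le_of_mul_le_mul_right ?_ hRε
      refine h3.trans (le_of_eq (by ring))
    rw [← div_eq_mul_inv, le_div_iff₀ hbε] at h4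
    linarith

theorem base_choice (V : ℕ) (hV : 1 ≤ V) {δ : ℝ} (hδ : 0 < δ) (hδ1 : δ < 1) :
    ∃ b : ℕ, δ ^ (-(1 / (V : ℝ))) / 2 ≤ b ∧ ∀ n : ℕ, (b : ℝ) ^ n ≤ δ ^ (-((n : ℝ) / V)) := by
  have hV0 : (0 : ℝ) < V := by exact_mod_cast hV
  have h1 : 1 ≤ δ ^ (-(1 / (V : ℝ))) :=
    Real.one_le_rpow_of_pos_of_le_one_of_nonpos hδ hδ1.le (by simp)
  refine ⟨⌊δ ^ (-(1 / (V : ℝ)))⌋₊, ?_, ?_⟩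
  · have h2 := Nat.lt_floor_add_one (δ ^ (-(1 / (V : ℝ))))
    have h3 : (1 : ℝ) ≤ ⌊δ ^ (-(1 / (V : ℝ)))⌋₊ := by
      exact_mod_cast Nat.le_floor (by simpa using h1)
    linarith
  · intro n
    have h2 := Nat.floor_le (show 0 ≤ δ ^ (-(1 / (V : ℝ))) by positivity)
    calc _ ≤ (δ ^ (-(1 / (V : ℝ)))) ^ n := by gcongr
      _ = _ := by
        rw [← Real.rpow_natCast, ← Real.rpow_mul hδ.le]; congr 1; ring

set_option maxHeartbeats 2000000 in
theorem disc {κ σ : ℝ} (hκ : 0 < κ) (hκσ : κ ≤ σ) (hσ : σ < 1) {C1 : ℝ} (hC1 : 0 ≤ C1) :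
    ∃ η δ0 : ℝ, 0 < η ∧ 0 < δ0 ∧ δ0 ≤ 1 ∧ ∀ δ, 0 < δ → δ < δ0 → ∀ A X : Finset ℝ, A.Nonempty →
      (∀ x ∈ X, 0 ≤ x ∧ x ≤ 1) → (∃ x0 ∈ X, (δ ^ (-η))⁻¹ ≤ x0) →
      (∀ x ∈ X, cov δ (A + x • A) ≤ δ ^ (-η) * cov δ A) →
      (∀ r, δ ≤ r → r ≤ 1 → (δ ^ (-η))⁻¹ * r ^ (-κ) ≤ cov r X) →
      (∀ r, δ ≤ r → r ≤ 1 → (δ ^ (-η))⁻¹ * r ^ (-κ) ≤ cov r A) →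
      cov δ A ≤ δ ^ (-η) * δ ^ (-σ) → cov (δ ^ (-C1)) A ≤ δ ^ (-η) → False := by
  have hσ0 : 0 < σ := by linarith
  set ξ := (1 - σ) / (2 * (1 + σ)) with hξ
  have hξ0 : 0 < ξ := div_pos (by linarith) (by linarith)
  have hξ1 : ξ ≤ 1 / 2 := by rw [hξ, div_le_div_iff₀ (by linarith) (by linarith)]; linarith
  set σ' := (1 + σ) / 2 with hσ'
  have hσξ : σ' * (1 - ξ) = σ + (1 - σ) / 4 := by
    rw [hξ, hσ']
    have : 1 + σ ≠ 0 := by linarith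
    field_simp; ring
  set ε2 := ξ * κ / (4 * (C1 + 1)) with hε2
  have hε0 : 0 < ε2 := by positivity
  have hεC : (C1 + 1) * ε2 = ξ * κ / 4 := by rw [hε2]; field_simp
  have hεκ : ε2 ≤ κ / 4 := by nlinarith [mul_nonneg hC1 hε0.le]
  obtain ⟨J, hJ⟩ := exists_nat_ge ((3 / ε2 + 4) / (1 - σ') + 2)
  have hσ'1 : 0 < 1 - σ' := by rw [hσ']; linarith
  have hJ2 : 2 ≤ J := by
    have : (0 : ℝ) ≤ (3 / ε2 + 4) / (1 - σ') := by positivity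
    have : (2 : ℝ) ≤ J := by linarith
    exact_mod_cast this
  have hJ3 : 3 / ε2 + 4 ≤ (1 - σ') * ((J : ℝ) - 1) := by
    have : (3 / ε2 + 4) / (1 - σ') ≤ (J : ℝ) - 1 := by linarith
    rw [div_le_iff₀ hσ'1] at this
    linarith
  obtain ⟨U, k, b0, hring⟩ := ring_thm hκ (by linarith) J hJ2
  obtain ⟨E, D, hD, hgood⟩ := good_Tit k
  obtain ⟨V, hV⟩ := exists_nat_ge (8 * ((U : ℝ) + 1) / (1 - σ) )
  have hV8 : 8 * ((U : ℝ) + 1) ≤ V * (1 - σ) := by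
    rwa [div_le_iff₀ (by linarith)] at hV
  have hV8' : 8 * ((U : ℝ) + 1) ≤ V := by nlinarith [(Nat.cast_nonneg V : (0 : ℝ) ≤ V)]
  have hVU : 8 * (U + 1) ≤ V := by exact_mod_cast hV8'
  have hVr : (0 : ℝ) < V := by
    have : (0 : ℝ) ≤ U := Nat.cast_nonneg U
    linarith
  -- η
  obtain ⟨η, hη0, hη1, hη2, hη3⟩ : ∃ η : ℝ, 0 < η ∧ η ≤ ξ * κ / 16 ∧ η ≤ (1 - σ) / 16 ∧
      η * (4 * E + 90) ≤ 1 / (2 * V) := by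
    refine ⟨min (ξ * κ / 16) (min ((1 - σ) / 16) (1 / (2 * V) / (4 * E + 90))), ?_,
      min_le_left _ _, (min_le_right _ _).trans (min_le_left _ _), ?_⟩
    · have : 0 < 1 - σ := by linarith
      positivity
    · have h : min (ξ * κ / 16) (min ((1 - σ) / 16) (1 / (2 * (V : ℝ)) / (4 * E + 90)))
        ≤ 1 / (2 * V) / (4 * E + 90) := (min_le_right _ _).trans (min_le_right _ _)
      rwa [le_div_iff₀ (by positivity)] at h
  obtain ⟨d1, hd1, hd1', hs1⟩ := small_pow 100 η hη0
  obtain ⟨d2, hd2, hd2', hs2⟩ := small_pow (4 : ℝ) (ξ * κ / 8) (by positivity)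
  obtain ⟨d3, hd3, hd3', hs3⟩ := small_pow (3 : ℝ) ((1 - σ) / 16) (by linarith)
  obtain ⟨d4, hd4, hd4', hs4⟩ := small_pow (2 * 10 ^ 7 + 2 * b0 + 2 * D) (1 / (2 * V)) (by positivity)
  refine ⟨η, min (min d1 d2) (min d3 d4), hη0, by positivity,
    (min_le_left _ _).trans ((min_le_left _ _).trans hd1'), ?_⟩
  intro δ hδ hδlt A X hA hX hx0 h hXc hAc hAσ hfar
  rw [lt_min_iff, lt_min_iff, lt_min_iff] at hδlt
  obtain ⟨⟨l1, l2⟩, l3, l4⟩ := hδlt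
  replace hs1 := hs1 δ hδ l1
  replace hs2 := hs2 δ hδ l2
  replace hs3 := hs3 δ hδ l3
  replace hs4 := hs4 δ hδ l4
  have hδ1 : δ < 1 := l1.trans_le hd1'
  set K := δ ^ (-η) with hKdef
  have hK0 : 0 < K := by linarith
  have hK1 : 1 ≤ K := by linarith
  obtain ⟨b, hb1, hbn⟩ := base_choice V (by omega) hδ hδ1
  have hD0 : 0 < D := by linarith
  have hb0r : (0 : ℝ) ≤ b0 := Nat.cast_nonneg _
  -- lower bound on b
  have hbig : (10 ^ 7 + b0 + D) * K ^ (4 * E + 90) ≤ b := by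
    have a1 : K ^ (4 * E + 90) ≤ δ ^ (-(1 / (2 * (V : ℝ)))) := by
      rw [hKdef, ← Real.rpow_natCast, ← Real.rpow_mul hδ.le]
      apply Real.rpow_le_rpow_of_exponent_ge hδ hδ1.le
      push_cast
      linarith
    have a2 : δ ^ (-(1 / (V : ℝ))) = δ ^ (-(1 / (2 * (V : ℝ)))) * δ ^ (-(1 / (2 * (V : ℝ)))) := by
      rw [← Real.rpow_add hδ]; congr 1; field_simp; ring
    rw [a2] at hb1
    refine le_trans ?_ hb1
    rw [le_div_iff₀ (by norm_num)]
    calc (10 ^ 7 + b0 + D) * K ^ (4 * E + 90) * 2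
        = (2 * 10 ^ 7 + 2 * b0 + 2 * D) * K ^ (4 * E + 90) := by ring
      _ ≤ _ := mul_le_mul hs4 a1 (by positivity) (by positivity)
  have hKE : (1 : ℝ) ≤ K ^ (4 * E + 90) := one_le_pow₀ hK1
  have hKK : K ≤ K ^ (4 * E + 90) := le_self_pow₀ hK1 (by omega)
  have hbig2 : (10 ^ 7 + b0 + D) ≤ (b : ℝ) := le_trans (le_mul_of_one_le_right (by positivity) hKE) hbig
  have hb7 : (10 : ℝ) ^ 7 * K ^ (4 * E + 90) ≤ b := le_trans (by gcongr; linarith) hbig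
  have hbb0 : b0 ≤ b := by
    have : (b0 : ℝ) ≤ b := by linarith
    exact_mod_cast this
  have hbD : D ≤ b := by linarith
  have hbK : K ≤ b := by linarith
  have hbr : (2 : ℝ) ≤ b := by linarith
  have hbpos : (0 : ℝ) < b := by linarith
  have hb1' : (1 : ℝ) ≤ b := by linarith
  have hb2 : 2 ≤ b := by exact_mod_cast hbr
  -- powers of b
  have hbnV : ∀ n : ℕ, n ≤ V → (b : ℝ) ^ n ≤ δ⁻¹ := by
    intro n hn
    refine (hbn n).trans ?_
    rw [← Real.rpow_neg_one]
    apply Real.rpow_le_rpow_of_exponent_ge hδ hδ1.le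
    have : (n : ℝ) / V ≤ 1 := by rw [div_le_one hVr]; exact_mod_cast hn
    linarith
  have hbδ : (b : ℝ) ≤ δ⁻¹ := by simpa using hbnV 1 (by omega)
  -- scale R
  obtain ⟨i, hi1, hi2⟩ := minim (ξ := ξ) (ε2 := ε2) hδ hδ1 hK0 hb2 hbδ hC1 hε0 (by linarith) hξ0
    hAc hfar (by
      rw [hεC]
      have a1 : K ^ 2 ≤ δ ^ (-(ξ * κ / 8)) := by
        rw [hKdef, ← Real.rpow_natCast, ← Real.rpow_mul hδ.le]
        apply Real.rpow_le_rpow_of_exponent_ge hδ hδ1.le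
        push_cast; linarith
      have a2 : δ ^ (-(ξ * κ / 2)) ≤ δ ^ (-(ξ * (κ - ε2))) := by
        apply Real.rpow_le_rpow_of_exponent_ge hδ hδ1.le
        have := mul_le_mul_of_nonneg_left (show κ / 2 ≤ κ - ε2 by linarith) hξ0.le
        linarith
      have a3 : δ ^ (-(ξ * κ / 2)) = δ ^ (-(ξ * κ / 8)) * δ ^ (-(ξ * κ / 8)) * δ ^ (-(ξ * κ / 4)) := by
        rw [← Real.rpow_add hδ, ← Real.rpow_add hδ]; congr 1; ring
      refine lt_of_lt_of_le ?_ a2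
      rw [a3]
      have p1 : 0 < δ ^ (-(ξ * κ / 8)) := by positivity
      have p2 : 0 < δ ^ (-(ξ * κ / 4)) := by positivity
      refine mul_lt_mul_of_pos_right ?_ p2
      have := mul_le_mul_of_nonneg_right hs2 p1.le
      linarith)
  have hbase : Base A δ K X := by
    obtain ⟨x0, hx0, hx0'⟩ := hx0
    exact base_of hA hδ hs1 hX hx0 (by rwa [one_div]) h
  obtain ⟨w, y, hw, hJw, hyU, hdense⟩ := hring b hbb0 X hX (by
    intro n hn
    have hbn0 : (0 : ℝ) < (b : ℝ) ^ n := by positivity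
    have a1 := hXc ((b : ℝ) ^ n)⁻¹
      (by rw [le_inv_comm₀ hδ hbn0]; exact hbnV n (by omega))
      (inv_le_one_of_one_le₀ (one_le_pow₀ hb1'))
    refine le_trans ?_ a1
    rw [Real.inv_rpow hbn0.le, Real.rpow_neg hbn0.le, inv_inv, ← Real.rpow_natCast,
      ← Real.rpow_mul hbpos.le, Real.rpow_sub hbpos, Real.rpow_one, mul_comm (n : ℝ), div_eq_inv_mul]
    gcongr)
  -- exponents
  have hwr : (1 : ℝ) ≤ w := by exact_mod_cast hw
  have hwy : w < y := by
    have := Nat.mul_le_mul_right w hJ2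
    omega
  have hz : ((J : ℝ) - 1) * w ≤ ((y - w : ℕ) : ℝ) := by
    rw [Nat.cast_sub hwy.le]
    have : (J : ℝ) * w ≤ y := by exact_mod_cast hJw
    linarith
  set v := ⌈((w : ℝ) + 2) / ε2⌉₊ with hv
  have hv1 : (w : ℝ) + 2 ≤ ε2 * v := by
    have := Nat.le_ceil (((w : ℝ) + 2) / ε2)
    rw [div_le_iff₀ hε0] at this
    linarith
  have hv2 : (v : ℝ) ≤ 3 / ε2 * w + w := by
    have := (Nat.ceil_lt_add_one (show 0 ≤ ((w : ℝ) + 2) / ε2 by positivity)).le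
    have h2 : ((w : ℝ) + 2) / ε2 ≤ 3 / ε2 * w := by
      rw [div_mul_eq_mul_div]
      gcongr; linarith
    linarith
  have hexp : (v : ℝ) + 2 * w + 1 + σ' * (y - w : ℕ) ≤ (y - w : ℕ) := by
    have a1 : (3 / ε2 + 4) * w ≤ (1 - σ') * ((J : ℝ) - 1) * w := by gcongr
    have a2 : (1 - σ') * (((J : ℝ) - 1) * w) ≤ (1 - σ') * ((y - w : ℕ) : ℝ) := by gcongr
    linarith [mul_assoc (1 - σ') ((J : ℝ) - 1) (w : ℝ), add_mul (3 / ε2) 4 (w : ℝ),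
      sub_mul 1 σ' ((y - w : ℕ) : ℝ)]
  have hσ'0 : 0 < σ' := by rw [hσ']; linarith
  have hvz : v ≤ y - w := by
    have : (0 : ℝ) ≤ σ' * ((y - w : ℕ) : ℝ) := by positivity
    have : (v : ℝ) ≤ ((y - w : ℕ) : ℝ) := by linarith
    exact_mod_cast this
  -- i is large
  have hbi : δ ^ (-(1 - ξ)) ≤ (b : ℝ) ^ i := by
    have : δ ^ (-(1 - ξ)) = δ ^ ξ * δ⁻¹ := by
      rw [← Real.rpow_neg_one, ← Real.rpow_add hδ]; congr 1; ring
    rw [this, ← div_eq_mul_inv, div_le_iff₀ hδ]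
    linarith
  have hiU : U < i := by
    have h1 : (b : ℝ) ^ U < (b : ℝ) ^ i := by
      refine lt_of_le_of_lt (hbn U) (lt_of_lt_of_le ?_ hbi)
      apply Real.rpow_lt_rpow_of_exponent_gt hδ hδ1
      have : (U : ℝ) / V ≤ 1 / 8 := by rw [div_le_iff₀ hVr]; linarith
      linarith
    exact (pow_lt_pow_iff_right₀ (by linarith)).1 h1
  obtain ⟨m, hm1, hm2, hm3⟩ : ∃ m : ℕ, 1 ≤ m ∧ w + 1 + (y - w) * m ≤ i ∧ i ≤ (y - w) * m + U := by
    have hz0 : 0 < y - w := by omega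
    refine ⟨(i - w - 1) / (y - w), ?_, ?_, ?_⟩
    · rw [Nat.le_div_iff_mul_le hz0]; omega
    · have := Nat.mul_div_le (i - w - 1) (y - w)
      omega
    · have := Nat.lt_mul_div_succ (i - w - 1) hz0
      rw [Nat.mul_add] at this
      omega
  have hRm : δ * (b : ℝ) ^ i * (((b : ℝ) ^ (y - w))⁻¹) ^ m = δ * (b : ℝ) ^ (i - (y - w) * m) := by
    rw [inv_pow, ← pow_mul, mul_assoc, pow_sub₀ _ hbpos.ne' (by omega)]
  have hRge : D * δ * (b : ℝ) ^ w ≤ δ * (b : ℝ) ^ i * (((b : ℝ) ^ (y - w))⁻¹) ^ m := by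
    rw [hRm]
    calc D * δ * (b : ℝ) ^ w ≤ b * δ * (b : ℝ) ^ w := by gcongr
      _ = δ * (b : ℝ) ^ (w + 1) := by ring
      _ ≤ _ := by
        gcongr
        omega
  refine core hbase hD (hgood A X δ K hbase) hb7 hwy (R := δ * (b : ℝ) ^ i) (by positivity) hdense hvz
    hv1 hexp (hi2 v (by omega)) hm1 hRge ?_
  have c1 : cov (δ * (b : ℝ) ^ i * (((b : ℝ) ^ (y - w))⁻¹) ^ m) A ≤ 3 * cov δ A := by
    apply cov_coarse hδ
    rw [hRm]
    exact le_mul_of_one_le_right hδ.le (one_le_pow₀ hb1')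
  refine c1.trans ?_
  have c2 : (b : ℝ) ^ (σ' * i) ≤ (b : ℝ) ^ (σ' * (y - w : ℕ) * m) * δ ^ (-((1 - σ) / 8)) := by
    have d1 : (b : ℝ) ^ (σ' * i) ≤ (b : ℝ) ^ (σ' * (y - w : ℕ) * m + U) := by
      apply Real.rpow_le_rpow_of_exponent_le hb1'
      have : (i : ℝ) ≤ ((y - w : ℕ) : ℝ) * m + U := by exact_mod_cast hm3
      have s1 : σ' ≤ 1 := by linarith
      have : σ' * (i : ℝ) ≤ σ' * (((y - w : ℕ) : ℝ) * m + U) := by gcongr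
      have u0 : (0 : ℝ) ≤ U := Nat.cast_nonneg U
      have s2 := mul_le_mul_of_nonneg_right s1 u0
      linarith [mul_add σ' (((y - w : ℕ) : ℝ) * m) (U : ℝ), mul_assoc σ' ((y - w : ℕ) : ℝ) (m : ℝ)]
    rw [Real.rpow_add hbpos, Real.rpow_natCast] at d1
    refine d1.trans ?_
    gcongr
    refine (hbn U).trans ?_
    apply Real.rpow_le_rpow_of_exponent_ge hδ hδ1.le
    have : (U : ℝ) / V ≤ (1 - σ) / 8 := by rw [div_le_iff₀ hVr]; linarith
    linarith
  have c3 : δ ^ (-(σ + (1 - σ) / 4)) ≤ (b : ℝ) ^ (σ' * i) := by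
    have : (b : ℝ) ^ (σ' * i) = ((b : ℝ) ^ i) ^ σ' := by
      rw [← Real.rpow_natCast, ← Real.rpow_mul hbpos.le, mul_comm]
    rw [this]
    calc δ ^ (-(σ + (1 - σ) / 4)) = (δ ^ (-(1 - ξ))) ^ σ' := by
          rw [← Real.rpow_mul hδ.le, ← hσξ]; congr 1; ring
      _ ≤ _ := by gcongr
  have c4 : δ ^ (-(σ + (1 - σ) / 4)) = δ ^ (-σ) * δ ^ (-((1 - σ) / 16)) * δ ^ (-((1 - σ) / 16))
      * δ ^ (-((1 - σ) / 8)) := by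
    rw [← Real.rpow_add hδ, ← Real.rpow_add hδ, ← Real.rpow_add hδ]; congr 1; ring
  have c5 : K ≤ δ ^ (-((1 - σ) / 16)) := by
    rw [hKdef]
    apply Real.rpow_le_rpow_of_exponent_ge hδ hδ1.le
    linarith
  have c6 := c3.trans c2
  rw [c4] at c6
  have c7 := le_of_mul_le_mul_right c6 (by positivity)
  refine le_trans ?_ c7
  have p0 : 0 < δ ^ (-σ) := by positivity
  calc 3 * cov δ A ≤ 3 * (K * δ ^ (-σ)) := by gcongr
    _ = δ ^ (-σ) * 3 * K := by ring
    _ ≤ _ := by gcongr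

theorem msupport_compl_null (μ : Measure ℝ) : μ (msupport μ)ᶜ = 0 := by
  apply measure_null_of_locally_null
  intro x hx
  have hx' : ¬ ∀ U : Set ℝ, IsOpen U → x ∈ U → 0 < μ U := hx
  push Not at hx'
  obtain ⟨U, hU, hxU, h⟩ := hx'
  exact ⟨U, mem_nhdsWithin_of_mem_nhds (hU.mem_nhds hxU), le_antisymm h bot_le⟩

theorem msupport_Icc {μ : Measure ℝ} (h : μ (Set.Icc (0 : ℝ) 1)ᶜ = 0) {x : ℝ} (hx : x ∈ msupport μ) :
    0 ≤ x ∧ x ≤ 1 := by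
  by_contra hc
  have := hx (Set.Icc (0 : ℝ) 1)ᶜ isClosed_Icc.isOpen_compl (fun h' => hc h')
  rw [h] at this
  exact lt_irrefl _ this

/-- a point of the support outside a set of measure `< 1` -/
theorem exists_supp {μ : Measure ℝ} [IsProbabilityMeasure μ] {s : Set ℝ} (h : μ s < 1) :
    ∃ x ∈ msupport μ, x ∉ s := by
  by_contra hc
  push Not at hc
  have h1 : (Set.univ : Set ℝ) ⊆ s ∪ (msupport μ)ᶜ := by
    intro x _
    by_cases hx : x ∈ msupport μ
    · exact Or.inl (hc x hx)
    · exact Or.inr hx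
  have h2 := (measure_mono h1).trans (measure_union_le (μ := μ) s (msupport μ)ᶜ)
  rw [msupport_compl_null, add_zero, measure_univ] at h2
  exact absurd h (not_lt.2 h2)

theorem cover_count {ν : Measure ℝ} {T : Set ℝ} {Y : Finset ℝ} {δ r : ℝ} (hr : 0 < r) (hδr : δ ≤ r)
    (hT : T ⊆ ⋃ y ∈ Y, Metric.closedBall y δ) (B : ℝ≥0∞)
    (hB : ∀ y ∈ Y, ν (T ∩ Metric.closedBall y (2 * r)) ≤ B) :
    ν T ≤ ENNReal.ofReal (cov r Y) * B := by
  have hch : ∀ k ∈ flo r Y, ∃ y ∈ Y, ⌊y / r⌋ = k := fun k hk => by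
    obtain ⟨y, hy, h⟩ := Finset.mem_image.1 hk
    exact ⟨y, hy, h⟩
  choose! g hg1 hg2 using hch
  have h1 : T ⊆ ⋃ k ∈ flo r Y, T ∩ Metric.closedBall (g k) (2 * r) := by
    intro t ht
    obtain ⟨y, hy, hty⟩ := Set.mem_iUnion₂.1 (hT ht)
    have hk : ⌊y / r⌋ ∈ flo r Y := Finset.mem_image_of_mem (fun y => ⌊y / r⌋) hy
    refine Set.mem_iUnion₂.2 ⟨⌊y / r⌋, hk, ht, ?_⟩
    rw [Metric.mem_closedBall, Real.dist_eq] at hty ⊢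
    have h2 := Int.abs_sub_lt_one_of_floor_eq_floor (hg2 _ hk)
    rw [← sub_div, abs_div, abs_of_pos hr, div_lt_one hr] at h2
    have h3 : |t - g ⌊y / r⌋| ≤ |t - y| + |y - g ⌊y / r⌋| := abs_sub_le _ _ _
    rw [abs_sub_comm y] at h3
    linarith
  calc ν T ≤ ν (⋃ k ∈ flo r Y, T ∩ Metric.closedBall (g k) (2 * r)) := measure_mono h1
    _ ≤ ∑ k ∈ flo r Y, ν (T ∩ Metric.closedBall (g k) (2 * r)) := measure_biUnion_finset_le _ _
    _ ≤ ∑ k ∈ flo r Y, B := Finset.sum_le_sum fun k hk => hB _ (hg1 k hk)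
    _ = _ := by
      rw [Finset.sum_const, nsmul_eq_mul, cov_eq, ENNReal.ofReal_natCast]

theorem vol_upper {Y : Finset ℝ} {δ : ℝ} (hδ : 0 < δ) :
    volume (⋃ y ∈ Y, Metric.closedBall y δ) ≤ ENNReal.ofReal (4 * δ * cov δ Y) := by
  refine (cover_count hδ le_rfl subset_rfl (ENNReal.ofReal (4 * δ)) ?_).trans ?_
  · intro y _
    refine (measure_mono Set.inter_subset_right).trans ?_
    rw [Real.volume_closedBall]
    apply ENNReal.ofReal_le_ofReal; linarith
  · rw [← ENNReal.ofReal_mul (cov_nonneg _ _), mul_comm]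

theorem vol_lower {Y : Finset ℝ} {δ : ℝ} (hδ : 0 < δ) {T : Set ℝ}
    (hT : ∀ y ∈ Y, Metric.closedBall y δ ⊆ T) :
    ENNReal.ofReal (δ * cov δ Y) ≤ 2 * volume T := by
  obtain ⟨P, hP, hc, hs⟩ := rep_exists δ hδ Y 4 (by norm_num)
  have h1 : volume (⋃ y ∈ P, Metric.closedBall y δ) = ∑ y ∈ P, volume (Metric.closedBall y δ) := by
    apply measure_biUnion_finset
    · intro p hp p' hp' hne
      have h2 := hs p hp p' hp' hne
      apply Metric.closedBall_disjoint_closedBall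
      rw [Real.dist_eq]
      push_cast at h2
      linarith
    · intro p _; exact Metric.isClosed_closedBall.measurableSet
  simp only [Real.volume_closedBall, Finset.sum_const, nsmul_eq_mul] at h1
  have h2 : volume (⋃ y ∈ P, Metric.closedBall y δ) ≤ volume T :=
    measure_mono (Set.iUnion₂_subset fun y hy => hT y (hP hy))
  rw [h1] at h2
  calc ENNReal.ofReal (δ * cov δ Y) ≤ ENNReal.ofReal (2 * (P.card * (2 * δ))) := by
        apply ENNReal.ofReal_le_ofReal
        push_cast at hc
        nlinarith
    _ = 2 * ((P.card : ℝ≥0∞) * ENNReal.ofReal (2 * δ)) := by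
        rw [ENNReal.ofReal_mul (by norm_num), ENNReal.ofReal_mul (by positivity),
          ENNReal.ofReal_natCast]; norm_num
    _ ≤ 2 * volume T := by gcongr

theorem far_point {μ : Measure ℝ} [IsProbabilityMeasure μ] {S : Finset ℝ} {δ R1 B : ℝ}
    (hS : S.Nonempty) (hδ : 0 < δ) (hR1 : δ ≤ R1)
    (hμ : ∀ x, μ (Metric.closedBall x (δ / R1)) ≤ ENNReal.ofReal B)
    (hB : cov δ S ^ 4 * B < 1) :
    ∃ x ∈ msupport μ, ∀ M, cov δ (S + x • S) ≤ M * cov δ S → cov R1 S ≤ 30 * M := by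
  have hR0 : 0 < R1 := hδ.trans_le hR1
  obtain ⟨P0, hP0, hP0c, hP0r⟩ := rep_one δ S
  have hP0c' : cov δ P0 = (P0.card : ℝ) := hP0r P0 subset_rfl
  have hflo : flo δ P0 = flo δ S := by
    apply Finset.eq_of_subset_of_card_le (Finset.image_subset_image hP0)
    have : ((flo δ S).card : ℝ) ≤ (flo δ P0).card := by
      rw [← cov_eq, ← cov_eq, hP0c, hP0c']
    exact_mod_cast this
  have hnear : cov R1 S ≤ 5 * cov R1 P0 := by
    have h1 := cov_le (c := 0) (e := δ) hR0 hR0 hδ.le (Y := S) (Z := P0) (by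
      intro y hy
      have hk : ⌊y / δ⌋ ∈ flo δ P0 := by
        rw [hflo]; exact Finset.mem_image_of_mem (fun y => ⌊y / δ⌋) hy
      obtain ⟨p, hp, hpy⟩ := Finset.mem_image.1 hk
      refine ⟨p, hp, ?_⟩
      have h2 := Int.abs_sub_lt_one_of_floor_eq_floor hpy
      rw [← sub_div, abs_div, abs_of_pos hδ, div_lt_one hδ, abs_sub_comm] at h2
      rw [add_zero]; exact h2.le)
    refine h1.trans (mul_le_mul_of_nonneg_right ?_ (cov_nonneg _ _))
    have : (R1 + 2 * δ) / R1 ≤ 3 := by rw [div_le_iff₀ hR0]; linarith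
    linarith
  obtain ⟨P, hP, hPc, hPs⟩ := rep_exists R1 hR0 P0 2 (by norm_num)
  have hPs' : ∀ p ∈ P, ∀ p' ∈ P, p ≠ p' → R1 ≤ |p - p'| := by
    intro p hp p' hp' hne
    have := hPs p hp p' hp' hne
    push_cast at this
    linarith
  set QQ := (P0 ×ˢ P0) ×ˢ (P0 ×ˢ P0) with hQQ
  have hbad : μ (⋃ q ∈ QQ, Metric.closedBall (-(q.1.1 - q.1.2) / (q.2.1 - q.2.2)) (δ / R1)) < 1 := by
    calc _ ≤ ∑ q ∈ QQ, μ (Metric.closedBall (-(q.1.1 - q.1.2) / (q.2.1 - q.2.2)) (δ / R1)) :=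
          measure_biUnion_finset_le _ _
      _ ≤ ∑ q ∈ QQ, ENNReal.ofReal B := Finset.sum_le_sum fun q _ => hμ _
      _ = ENNReal.ofReal (cov δ S ^ 4 * B) := by
          rw [Finset.sum_const, nsmul_eq_mul, ENNReal.ofReal_mul (by have := cov_nonneg δ S; positivity),
            hP0c, ← Nat.cast_pow, ENNReal.ofReal_natCast, hQQ]
          congr 2
          simp only [Finset.card_product]; ring
      _ < 1 := by rw [← ENNReal.ofReal_one]; exact (ENNReal.ofReal_lt_ofReal_iff one_pos).2 hB
  obtain ⟨x, hx, hxb⟩ := exists_supp hbad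
  refine ⟨x, hx, fun M hM => ?_⟩
  have hsep : ∀ p ∈ P, ∀ p' ∈ P, p ≠ p' → ∀ z ∈ P0, ∀ z' ∈ P0,
      δ ≤ |x * p + z - (x * p' + z')| := by
    intro p hp p' hp' hne z hz z' hz'
    by_contra hlt
    push Not at hlt
    apply hxb
    refine Set.mem_iUnion₂.2 ⟨((z, z'), (p, p')), ?_, ?_⟩
    · rw [hQQ]; simp only [Finset.mem_product]; exact ⟨⟨hz, hz'⟩, hP hp, hP hp'⟩
    · have hR := hPs' p hp p' hp' hne
      have hd : p - p' ≠ 0 := sub_ne_zero.2 hne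
      have hd0 : 0 < |p - p'| := abs_pos.2 hd
      rw [Metric.mem_closedBall, Real.dist_eq]
      have e : x - -(z - z') / (p - p') = (x * p + z - (x * p' + z')) / (p - p') := by
        field_simp; ring
      simp only
      rw [e, abs_div]
      exact div_le_div₀ hδ.le hlt.le hR0 hR
  have hcard : (x • P).card = P.card := by
    apply Finset.card_image_of_injOn
    intro p hp p' hp' hpp
    by_contra hne
    have hpp' : x * p = x * p' := hpp
    have := hsep p hp p' hp' hne p (hP hp) p (hP hp)
    rw [hpp', sub_self, abs_zero] at this
    linarith
  have h1 := sep_mul hδ (x • P) P0 (by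
    intro u hu u' hu' hne z hz z' hz'
    obtain ⟨p, hp, rfl⟩ := Finset.mem_smul_finset.1 hu
    obtain ⟨p', hp', rfl⟩ := Finset.mem_smul_finset.1 hu'
    exact hsep p hp p' hp' (fun h => hne (by rw [h])) z hz z' hz')
  have h2 : cov δ (x • P + P0) ≤ cov δ (S + x • S) := by
    apply cov_mono
    rw [add_comm]
    exact Finset.add_subset_add hP0 (Finset.smul_finset_subset_smul_finset (hP.trans hP0))
  rw [hcard, hP0c', ← hP0c] at h1
  push_cast at hPc
  have hN : 1 ≤ cov δ S := cov_pos hS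
  have h3 : (P.card : ℝ) * cov δ S ≤ 3 * M * cov δ S := by linarith
  have h4 := le_of_mul_le_mul_right h3 (by linarith)
  linarith

/-- finite `δ`-net of a subset of `[0,1]` -/
theorem net_exists {T : Set ℝ} (hT : ∀ x ∈ T, 0 ≤ x ∧ x ≤ 1) {δ : ℝ} (hδ : 0 < δ) :
    ∃ X : Finset ℝ, (∀ x ∈ X, x ∈ T) ∧ T ⊆ ⋃ y ∈ X, Metric.closedBall y δ := by
  have hb : TotallyBounded T := (isCompact_Icc (a := (0 : ℝ)) (b := 1)).totallyBounded.subset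
    (fun x hx => hT x hx)
  obtain ⟨t, ht, htf, hc⟩ := Metric.finite_approx_of_totallyBounded hb δ hδ
  refine ⟨htf.toFinset, fun x hx => ht (by simpa using hx), ?_⟩
  intro x hx
  obtain ⟨y, hy, hxy⟩ := Set.mem_iUnion₂.1 (hc hx)
  exact Set.mem_iUnion₂.2 ⟨y, by simpa using hy, Metric.ball_subset_closedBall hxy⟩


theorem lower_conv {N K δ ε r κ : ℝ} (hN : 0 ≤ N) (hδ : 0 < δ) (hr : 0 < r) (hκ : 0 < κ) (hκ1 : κ ≤ 1)
    (hK : 2 * δ ^ (-ε) ≤ K)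
    (h : 1 ≤ ENNReal.ofReal N * ENNReal.ofReal (δ ^ (-ε) * (2 * r) ^ κ)) :
    K⁻¹ * r ^ (-κ) ≤ N := by
  rw [← ENNReal.ofReal_mul hN, ← ENNReal.ofReal_one,
    ENNReal.ofReal_le_ofReal_iff (by positivity)] at h
  have hd : 0 < δ ^ (-ε) := by positivity
  have hK0 : 0 < K := by linarith
  have hrk : 0 < r ^ κ := by positivity
  have h2 : (2 * r) ^ κ ≤ 2 * r ^ κ := by
    rw [Real.mul_rpow (by norm_num) hr.le]
    have : (2 : ℝ) ^ κ ≤ 2 ^ (1 : ℝ) := Real.rpow_le_rpow_of_exponent_le (by norm_num) hκ1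
    rw [Real.rpow_one] at this
    gcongr
  have h3 : 1 ≤ N * (K * r ^ κ) := by
    refine h.trans (mul_le_mul_of_nonneg_left ?_ hN)
    calc δ ^ (-ε) * (2 * r) ^ κ ≤ δ ^ (-ε) * (2 * r ^ κ) := by gcongr
      _ = 2 * δ ^ (-ε) * r ^ κ := by ring
      _ ≤ _ := by gcongr
  rw [Real.rpow_neg hr.le, ← mul_inv, inv_le_iff_one_le_mul₀ (by positivity)]
  linarith

set_option maxHeartbeats 1000000 in
/-- Bourgain's discretised sum-product/projection hybrid theorem: for `0 < κ ≤ σ < 1` there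
are `c, ε, δ₀ ∈ (0,1]` depending only on `κ, σ` such that for `0 < δ < δ₀`, any
`(δ, κ, δ^{−ε})`-set `A ⊆ ℝ` of measure at most `δ^{1−σ}` and any `(κ, δ^{−ε})`-Frostman
probability measure `μ` on `[0,1]`, there is `x ∈ supp μ` with
`vol(A + xA) > δ^{−c} vol(A)`. -/
theorem bourgain_ring (κ σ : ℝ) (hκ : 0 < κ) (hκσ : κ ≤ σ) (hσ : σ < 1) :
    ∃ c ε δ₀ : ℝ, c ∈ Set.Ioc (0:ℝ) 1 ∧ ε ∈ Set.Ioc (0:ℝ) 1 ∧ δ₀ ∈ Set.Ioc (0:ℝ) 1 ∧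
      ∀ δ : ℝ, 0 < δ → δ < δ₀ →
      ∀ A : Set ℝ,
        (∃ S : Finset ℝ, S.Nonempty ∧ A = ⋃ x ∈ S, Metric.closedBall x δ) →
        volume A ≤ ENNReal.ofReal (δ ^ (1 - σ)) →
        (∀ x ∈ A, ∀ r : ℝ, δ ≤ r →
          volume (A ∩ Metric.closedBall x r) ≤
            ENNReal.ofReal (δ ^ (-ε) * r ^ κ) * volume A) →
      ∀ μ : Measure ℝ, IsProbabilityMeasure μ → μ (Set.Icc (0:ℝ) 1)ᶜ = 0 →
        (∀ x r : ℝ, 0 < r →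
          μ (Metric.closedBall x r) ≤ ENNReal.ofReal (δ ^ (-ε) * r ^ κ)) →
      ∃ x ∈ msupport μ,
        ENNReal.ofReal (δ ^ (-c)) * volume A < volume (A + x • A) := by
  have hκ1 : κ ≤ 1 := by linarith
  obtain ⟨η, d0, hη, hd0, hd01, hdisc⟩ := disc hκ hκσ hσ (C1 := 9 / κ) (by positivity)
  set c := min (η / 2) 1 with hc
  set ε := min (η * κ / 2) 1 with hε
  have hcη : c ≤ η / 2 := min_le_left _ _
  have hεη : ε ≤ η * κ / 2 := min_le_left _ _
  have hε1 : ε ≤ 1 := min_le_right _ _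
  have hεη2 : ε ≤ η / 2 := by nlinarith
  obtain ⟨d1, hd1, hd1', hs1⟩ := small_pow 1000 (η / 2) (by positivity)
  refine ⟨c, ε, min d0 (min d1 (1 / 2)), ⟨by positivity, min_le_right _ _⟩,
    ⟨by positivity, min_le_right _ _⟩, ⟨by positivity, (min_le_left _ _).trans hd01⟩, ?_⟩
  intro δ hδ hlt A hAS hAvol hAr μ hμp hμ01 hμr
  obtain ⟨S, hS, hASe⟩ := hAS
  rw [lt_min_iff, lt_min_iff] at hlt
  obtain ⟨l0, l1, l2⟩ := hlt
  replace hs1 := hs1 δ hδ l1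
  have hδ1 : δ < 1 := by linarith
  by_contra hcon
  push Not at hcon
  set K := δ ^ (-η) with hK
  have hKsplit : K = δ ^ (-(η / 2)) * δ ^ (-(η / 2)) := by
    rw [hK, ← Real.rpow_add hδ]; congr 1; ring
  have hp0 : 0 < δ ^ (-(η / 2)) := by positivity
  have hKbig : ∀ e, e ≤ η / 2 → 1000 * δ ^ (-e) ≤ K := by
    intro e he
    rw [hKsplit]
    have : δ ^ (-e) ≤ δ ^ (-(η / 2)) :=
      Real.rpow_le_rpow_of_exponent_ge hδ hδ1.le (by linarith)
    gcongr
  have hKε : 2 * δ ^ (-ε) ≤ K := by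
    have := hKbig ε hεη2
    have : 0 < δ ^ (-ε) := by positivity
    linarith
  have hKc := hKbig c hcη
  have hpc : 0 < δ ^ (-c) := by positivity
  have hK1000 : 1000 ≤ K := by simpa using hKbig 0 (by positivity)
  have hSA : ∀ s ∈ S, Metric.closedBall s δ ⊆ A := by
    intro s hs
    rw [hASe]
    exact Set.subset_biUnion_of_mem (u := fun x => Metric.closedBall x δ) hs
  have hSA' : ∀ s ∈ S, s ∈ A := fun s hs => hSA s hs (Metric.mem_closedBall_self hδ.le)
  -- sumset
  have hsum : ∀ x ∈ msupport μ, cov δ (S + x • S) ≤ 8 * δ ^ (-c) * cov δ S := by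
    intro x hx
    have h1 : ENNReal.ofReal (δ * cov δ (S + x • S)) ≤ 2 * volume (A + x • A) := by
      apply vol_lower hδ
      intro y hy z hz
      obtain ⟨s, hs, u, hu, rfl⟩ := Finset.mem_add.1 hy
      obtain ⟨s', hs', rfl⟩ := Finset.mem_smul_finset.1 hu
      rw [Metric.mem_closedBall, Real.dist_eq] at hz
      refine Set.mem_add.2 ⟨z - x • s', ?_, x • s', Set.smul_mem_smul_set (hSA' s' hs'), by ring⟩
      apply hSA s hs
      rw [Metric.mem_closedBall, Real.dist_eq]
      have : z - x • s' - s = z - (s + x • s') := by ring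
      rwa [this]
    have h2 := hcon x hx
    have h3 : volume A ≤ ENNReal.ofReal (4 * δ * cov δ S) := by rw [hASe]; exact vol_upper hδ
    have h4 : ENNReal.ofReal (δ * cov δ (S + x • S))
        ≤ ENNReal.ofReal (2 * (δ ^ (-c) * (4 * δ * cov δ S))) := by
      rw [ENNReal.ofReal_mul (p := 2) (by norm_num), ENNReal.ofReal_mul hpc.le]
      calc _ ≤ _ := h1
        _ ≤ 2 * (ENNReal.ofReal (δ ^ (-c)) * volume A) := by gcongr
        _ ≤ 2 * (ENNReal.ofReal (δ ^ (-c)) * ENNReal.ofReal (4 * δ * cov δ S)) := by gcongr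
        _ = _ := by norm_num
    have := cov_nonneg δ S
    rw [ENNReal.ofReal_le_ofReal_iff (by positivity)] at h4
    refine le_of_mul_le_mul_left ?_ hδ
    linarith
  -- size of S
  have hsize : cov δ S ≤ 2 * δ ^ (-σ) := by
    have h1 := vol_lower hδ hSA
    have h2 : ENNReal.ofReal (δ * cov δ S) ≤ ENNReal.ofReal (2 * δ ^ (1 - σ)) := by
      rw [ENNReal.ofReal_mul (p := 2) (by norm_num)]
      refine h1.trans ?_
      norm_num
      gcongr
    rw [ENNReal.ofReal_le_ofReal_iff (by positivity), sub_eq_add_neg, Real.rpow_add hδ,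
      Real.rpow_one] at h2
    refine le_of_mul_le_mul_left ?_ hδ
    linarith
  have hvol0 : volume A ≠ 0 := by
    obtain ⟨s, hs⟩ := hS
    have h1 := measure_mono (μ := volume) (hSA s hs)
    rw [Real.volume_closedBall] at h1
    intro h0
    rw [h0] at h1
    have := ENNReal.ofReal_pos.2 (show 0 < 2 * δ by positivity)
    exact absurd h1 (not_le.2 this)
  have hvolt : volume A ≠ ⊤ := ne_top_of_le_ne_top ENNReal.ofReal_ne_top hAvol
  have hAc : ∀ r, δ ≤ r → r ≤ 1 → K⁻¹ * r ^ (-κ) ≤ cov r S := by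
    intro r hr _
    have hr0 : 0 < r := hδ.trans_le hr
    have h1 := cover_count (ν := volume) (T := A) (Y := S) hr0 hr hASe.le
      (ENNReal.ofReal (δ ^ (-ε) * (2 * r) ^ κ) * volume A)
      (fun y hy => hAr y (hSA' y hy) (2 * r) (by linarith))
    refine lower_conv (cov_nonneg _ _) hδ hr0 hκ hκ1 hKε ?_
    rw [← mul_assoc] at h1
    by_contra hlt
    push Not at hlt
    have := ENNReal.mul_lt_mul_left hvol0 hvolt hlt
    rw [one_mul] at this
    exact absurd h1 (not_le.2 this)
  -- far point
  have hR1 : δ ≤ δ ^ (-(9 / κ)) := by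
    have : 1 ≤ δ ^ (-(9 / κ)) :=
      Real.one_le_rpow_of_pos_of_le_one_of_nonpos hδ hδ1.le (by simp; positivity)
    linarith
  obtain ⟨x1, hx1, hfar⟩ := far_point (μ := μ) hS hδ hR1 (fun x => hμr x _ (by positivity)) (by
    have e1 : (δ / δ ^ (-(9 / κ))) ^ κ = δ ^ (κ + 9) := by
      have : δ / δ ^ (-(9 / κ)) = δ ^ (1 + 9 / κ) := by
        rw [Real.rpow_add hδ, Real.rpow_one, Real.rpow_neg hδ.le, div_inv_eq_mul]
      rw [this, ← Real.rpow_mul hδ.le]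
      congr 1; field_simp
    rw [e1, ← Real.rpow_add hδ]
    have hN : cov δ S ≤ 2 * δ⁻¹ := by
      refine hsize.trans ?_
      have : δ ^ (-σ) ≤ δ ^ (-1 : ℝ) := Real.rpow_le_rpow_of_exponent_ge hδ hδ1.le (by linarith)
      rw [Real.rpow_neg_one] at this
      linarith
    have e2 : δ ^ (-ε + (κ + 9)) ≤ δ ^ (8 : ℝ) :=
      Real.rpow_le_rpow_of_exponent_ge hδ hδ1.le (by linarith)
    have e3 : δ ^ (8 : ℝ) = δ ^ 8 := by exact_mod_cast Real.rpow_natCast δ 8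
    rw [e3] at e2
    have hN0 := cov_nonneg δ S
    calc cov δ S ^ 4 * δ ^ (-ε + (κ + 9)) ≤ (2 * δ⁻¹) ^ 4 * δ ^ 8 := by gcongr
      _ = (2 * δ) ^ 4 := by field_simp
      _ < 1 := pow_lt_one₀ (by positivity) (by linarith) (by norm_num))
  -- x0
  obtain ⟨x0, hx0, hx0'⟩ := exists_supp (μ := μ) (s := Metric.closedBall 0 (K⁻¹)) (by
    refine lt_of_le_of_lt (hμr 0 _ (by positivity)) ?_
    rw [← ENNReal.ofReal_one]
    refine (ENNReal.ofReal_lt_ofReal_iff one_pos).2 ?_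
    rw [hK, ← Real.rpow_neg hδ.le, ← Real.rpow_mul hδ.le, ← Real.rpow_add hδ]
    apply Real.rpow_lt_one hδ.le hδ1
    nlinarith [mul_pos hη hκ])
  have hx0'' : K⁻¹ ≤ x0 := by
    rw [Metric.mem_closedBall, Real.dist_eq, sub_zero, abs_of_nonneg (msupport_Icc hμ01 hx0).1] at hx0'
    linarith
  obtain ⟨X0, hX0, hX0c⟩ := net_exists (T := msupport μ) (fun x hx => msupport_Icc hμ01 hx) hδ
  set X := insert x0 (insert x1 X0) with hX
  have hXs : ∀ x ∈ X, x ∈ msupport μ := by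
    intro x hx
    simp only [hX, Finset.mem_insert] at hx
    rcases hx with rfl | rfl | h
    · exact hx0
    · exact hx1
    · exact hX0 x h
  have hXcov : msupport μ ⊆ ⋃ y ∈ X, Metric.closedBall y δ := by
    refine hX0c.trans (Set.biUnion_subset_biUnion_left ?_)
    intro y hy
    simp only [hX]
    exact Finset.mem_insert_of_mem (Finset.mem_insert_of_mem hy)
  refine hdisc δ hδ l0 S X hS (fun x hx => msupport_Icc hμ01 (hXs x hx))
    ⟨x0, by simp [hX], hx0''⟩ ?_ ?_ hAc ?_ ?_
  · intro x hx
    refine (hsum x (hXs x hx)).trans ?_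
    refine mul_le_mul_of_nonneg_right ?_ (cov_nonneg _ _)
    linarith
  · intro r hr _
    have hr0 : 0 < r := hδ.trans_le hr
    have h1 := cover_count (ν := μ) (T := msupport μ) (Y := X) hr0 hr hXcov
      (ENNReal.ofReal (δ ^ (-ε) * (2 * r) ^ κ))
      (fun y hy => (measure_mono Set.inter_subset_right).trans (hμr y (2 * r) (by linarith)))
    refine lower_conv (cov_nonneg _ _) hδ hr0 hκ hκ1 hKε (le_trans ?_ h1)
    have h2 := measure_union_le (μ := μ) (msupport μ) (msupport μ)ᶜ
    rw [Set.union_compl_self, measure_univ, msupport_compl_null, add_zero] at h2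
    exact h2
  · have : 0 < δ ^ (-σ) := by positivity
    refine hsize.trans ?_
    gcongr; linarith
  · refine (hfar _ (hsum x1 hx1)).trans ?_
    linarith
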